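/- arXiv:1108.5415 — 4 statements merged into one kernel-verified Lean document; each statement's English description precedes it below -/
import Mathlib

section
/- Let x, y ∈ Δ_G and let (X_t, Y_t) be two copies of the Gibbs sampler on Δ_G started from X_0 = x and Y_0 = y and coupled under the proportional coupling. Then for every integer t ≥ 0, E[‖X_t − Y_t‖_2²] ≤ 4n·e^{−⌊tγ̂/8⌋}, where ‖X_t − Y_t‖_2² = ∑_{g∈G}(X_t[g] − Y_t[g])². -/
open MeasureTheory

noncomputable section

/-- Uniform probability measure on a finset. -/
def unifOn {α : Type*} [MeasurableSpace α] (s : Finset α) : Measure α :=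
  (s.card : ENNReal)⁻¹ • ∑ a ∈ s, Measure.dirac a

/-- Total variation distance between two measures. -/
def tvDist {α : Type*} [MeasurableSpace α] (μ ν : Measure α) : ℝ :=
  ⨆ A : {A : Set α // MeasurableSet A}, ((μ A).toReal - (ν A).toReal)

variable (G : Type*) [Group G] [Fintype G] [DecidableEq G] [MeasurableSpace G]
  [DiscreteMeasurableSpace G]

/-- The simplex of probability vectors indexed by `G`. -/
def simplexG : Set (G → ℝ) := {x | (∀ g, 0 ≤ x g) ∧ ∑ g, x g = 1}

/-- The uniform (normalized `(n-1)`-dimensional Hausdorff) measure on the simplex. -/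
def UG : Measure (G → ℝ) :=
  (μH[(Fintype.card G : ℝ) - 1] (simplexG G))⁻¹ •
    (μH[(Fintype.card G : ℝ) - 1]).restrict (simplexG G)

/-- One step of the Gibbs sampler on the simplex from update datum `(g, r, λ)`. -/
def gibbsStepG (x : G → ℝ) (u : G × G × ℝ) : G → ℝ := fun h =>
  if h = u.1 then u.2.2 * (x u.1 + x (u.1 * u.2.1))
  else if h = u.1 * u.2.1 then (1 - u.2.2) * (x u.1 + x (u.1 * u.2.1))
  else x h

/-- Law of the random update datum: `g` uniform on `G`, `r` uniform on `R`,
`λ` uniform on `[0,1]`. -/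
def driveG (R : Finset G) : Measure (G × G × ℝ) :=
  (unifOn (Finset.univ : Finset G)).prod
    ((unifOn R).prod ((volume : Measure ℝ).restrict (Set.Icc 0 1)))

/-- Law of the Gibbs sampler after `T` steps started at `x`. -/
def lawG (R : Finset G) (x : G → ℝ) (T : ℕ) : Measure (G → ℝ) :=
  Measure.map (fun ω : Fin T → G × G × ℝ => (List.ofFn ω).foldl (gibbsStepG G) x)
    (Measure.pi fun _ => driveG G R)

/-- The transition matrix of the slowed simple random walk on `G`. -/
def KhatM (R : Finset G) : G → G → ℝ := fun z w =>
  if z = w then 1 - 2 / (Fintype.card G : ℝ)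
  else if z⁻¹ * w ∈ R then 2 / ((Fintype.card G : ℝ) * R.card) else 0

/-- The spectral gap `γ̂ = 1 - λ̂₂` of `K̂`, with the second-largest eigenvalue
expressed by the variational (Courant–Fischer) characterization. -/
def gapHat (R : Finset G) : ℝ :=
  1 - sSup {lam : ℝ | ∃ v : G → ℝ, ∑ g, v g = 0 ∧ ∑ g, (v g) ^ 2 = 1 ∧
    lam = ∑ g, ∑ h, v g * KhatM G R g h * v h}


section Helpers
set_option linter.unusedSectionVars false
variable {G}

/-- autocorrelation -/
def corr (d : G → ℝ) : G → ℝ := fun w => ∑ z, d z * d (z * w)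

/-- evolution of the autocorrelation -/
def evo (R : Finset G) : (G → ℝ) →ₗ[ℝ] (G → ℝ) where
  toFun C := fun w => C w + ((Fintype.card G : ℝ) * R.card)⁻¹ *
    (∑ r ∈ R, (C (r * w) + C (w * r) - 2 * C w) +
     ∑ r ∈ R, 2 * (2 * C 1 - C r) / 3 * ((if w = 1 then 1 else 0) - (if w = r then 1 else 0)))
  map_add' C D := by
    funext w
    simp only [Pi.add_apply]
    rw [← Finset.sum_add_distrib, ← Finset.sum_add_distrib, ← Finset.sum_add_distrib]
    rw [add_add_add_comm, ← mul_add, ← Finset.sum_add_distrib]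
    congr 2
    apply Finset.sum_congr rfl
    intros; ring
  map_smul' a C := by
    funext w
    simp only [Pi.smul_apply, smul_eq_mul, RingHom.id_apply]
    rw [mul_add a, mul_left_comm a, ← Finset.sum_add_distrib, ← Finset.sum_add_distrib, Finset.mul_sum _ _ a]
    congr 2
    apply Finset.sum_congr rfl
    intros; ring

lemma evo_apply (R : Finset G) (C : G → ℝ) (w : G) :
    evo R C w = C w + ((Fintype.card G : ℝ) * R.card)⁻¹ *
    (∑ r ∈ R, (C (r * w) + C (w * r) - 2 * C w) +
     ∑ r ∈ R, 2 * (2 * C 1 - C r) / 3 * ((if w = 1 then 1 else 0) - (if w = r then 1 else 0))) := rfl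

lemma corr_inv (d : G → ℝ) (w : G) : corr d w⁻¹ = corr d w := by
  unfold corr
  rw [← Equiv.sum_comp (Equiv.mulRight w)]
  simp [mul_comm]

lemma corr_shift (d : G → ℝ) (a b : G) : ∑ g, d (g * a) * d (g * b) = corr d (a⁻¹ * b) := by
  unfold corr
  rw [← Equiv.sum_comp (Equiv.mulRight a) (fun z => d z * d (z * (a⁻¹ * b)))]
  simp [mul_assoc]

/-- first-order change -/
def corrP (d : G → ℝ) (g r : G) : G → ℝ := fun w =>
  d (g * w) - d (g * r * w) + d (g * w⁻¹) - d (g * r * w⁻¹)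

/-- second-order change -/
def corrQ (r : G) : G → ℝ := fun w =>
  2 * (if w = 1 then 1 else 0) - (if w = r then 1 else 0) - (if w = r⁻¹ then 1 else 0)

lemma step_eq (d : G → ℝ) (g r : G) (l : ℝ) (hr : r ≠ 1) :
    gibbsStepG G d (g, r, l) = fun z => d z + (l * (d g + d (g * r)) - d g) *
      ((if z = g then 1 else 0) - (if z = g * r then 1 else 0)) := by
  funext z
  unfold gibbsStepG
  have : g ≠ g * r := by simpa using hr
  by_cases h1 : z = g
  · subst h1; simp [hr]
  · by_cases h2 : z = g * r
    · subst h2; simp [hr]; ring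
    · simp [h1, h2]

lemma corr_step (d : G → ℝ) (g r : G) (l : ℝ) (hr : r ≠ 1) :
    corr (gibbsStepG G d (g, r, l)) = corr d + (l * (d g + d (g * r)) - d g) • corrP d g r
      + (l * (d g + d (g * r)) - d g) ^ 2 • corrQ r := by
  rw [step_eq d g r l hr]
  generalize (l * (d g + d (g * r)) - d g) = c
  funext w
  simp only [corr, corrP, corrQ, Pi.add_apply, Pi.smul_apply, smul_eq_mul]
  have e : ∀ z : G, (d z + c * ((if z = g then 1 else 0) - (if z = g * r then 1 else 0))) *
      (d (z * w) + c * ((if z * w = g then 1 else 0) - (if z * w = g * r then 1 else 0)))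
      = d z * d (z * w) + c * ((if z = g then d (z * w) else 0) - (if z = g * r then d (z * w) else 0)
        + (if z = g * w⁻¹ then d z else 0) - (if z = g * r * w⁻¹ then d z else 0))
        + c ^ 2 * ((if z = g then (if z * w = g then 1 else 0) - (if z * w = g * r then 1 else 0) else 0)
          - (if z = g * r then (if z * w = g then 1 else 0) - (if z * w = g * r then 1 else 0) else 0)) := by
    intro z
    simp only [eq_mul_inv_iff_mul_eq]
    split_ifs <;> ring
  rw [Finset.sum_congr rfl (fun z _ => e z)]
  simp only [Finset.sum_add_distrib, ← Finset.mul_sum, Finset.sum_sub_distrib, Finset.sum_ite_eq', Finset.sum_ite_eq,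
    Finset.mem_univ, if_true]
  have h1 : (g * r * w = g) ↔ w = r⁻¹ := by
    rw [mul_assoc, mul_eq_left, mul_eq_one_iff_inv_eq, eq_comm]
  simp only [mul_eq_left, mul_right_inj, h1]
  ring

lemma evo_corr (R : Finset G) (hsym : ∀ r ∈ R, r⁻¹ ∈ R) (hne : R.Nonempty) (d : G → ℝ) :
    ((Fintype.card G : ℝ) * R.card)⁻¹ • ∑ g, ∑ r ∈ R, (corr d + ((d (g * r) - d g) / 2) • corrP d g r
      + ((d g ^ 2 - d g * d (g * r) + d (g * r) ^ 2) / 3) • corrQ r) = evo R (corr d) := by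
  funext w
  have hn : (Fintype.card G : ℝ) ≠ 0 := by exact_mod_cast Fintype.card_ne_zero
  have hm : (R.card : ℝ) ≠ 0 := by exact_mod_cast hne.card_pos.ne'
  have inv_sum : ∀ f : G → ℝ, ∑ r ∈ R, f r⁻¹ = ∑ r ∈ R, f r := fun f =>
    Finset.sum_nbij' (fun r => r⁻¹) (fun r => r⁻¹) hsym hsym (by simp) (by simp) (by simp)
  rw [evo_apply, Finset.sum_comm]
  simp only [Pi.smul_apply, Finset.sum_apply, Pi.add_apply, smul_eq_mul]
  have e : ∀ r : G, ∑ g, (corr d w + ((d (g * r) - d g) / 2) * corrP d g r w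
      + ((d g ^ 2 - d g * d (g * r) + d (g * r) ^ 2) / 3) * corrQ r w)
      = Fintype.card G * corr d w + (corr d (r⁻¹ * w) + corr d (r * w) + corr d (w * r) + corr d (w * r⁻¹) - 4 * corr d w) / 2
        + (2 * corr d 1 - corr d r) / 3 * corrQ r w := by
    intro r
    have a1 := corr_shift d r w
    have a2 := corr_shift d r (r * w)
    have a3 := corr_shift d r w⁻¹
    have a4 := corr_shift d r (r * w⁻¹)
    have a5 := corr_shift d 1 w
    have a6 := corr_shift d 1 (r * w)
    have a7 := corr_shift d 1 w⁻¹
    have a8 := corr_shift d 1 (r * w⁻¹)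
    have b1 := corr_shift d 1 1
    have b2 := corr_shift d 1 r
    have b3 := corr_shift d r r
    have i1 : corr d (r⁻¹ * w⁻¹) = corr d (w * r) := by rw [← corr_inv]; simp
    have i2 : corr d (r * w⁻¹) = corr d (w * r⁻¹) := by rw [← corr_inv]; simp
    simp only [mul_one, inv_one, one_mul, inv_mul_cancel_left, inv_mul_cancel, corr_inv, i1, i2] at a1 a2 a3 a4 a5 a6 a7 a8 b1 b2 b3
    rw [← b1, ← b2] at *
    have : ∀ g, (corr d w + ((d (g * r) - d g) / 2) * corrP d g r w
      + ((d g ^ 2 - d g * d (g * r) + d (g * r) ^ 2) / 3) * corrQ r w) =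
       corr d w + (1/2) * (d (g * r) * d (g * w) - d (g * r) * d (g * (r * w)) + d (g * r) * d (g * w⁻¹)
         - d (g * r) * d (g * (r * w⁻¹)) - d g * d (g * w) + d g * d (g * (r * w)) - d g * d (g * w⁻¹)
         + d g * d (g * (r * w⁻¹))) + corrQ r w / 3 * (d g * d g - d g * d (g * r) + d (g * r) * d (g * r)) := by
      intro g; simp only [corrP, mul_assoc]; ring
    rw [Finset.sum_congr rfl (fun z _ => this z)]
    simp only [Finset.sum_add_distrib, ← Finset.mul_sum, Finset.sum_sub_distrib, a1, a2, a3, a4, a5, a6, a7, a8, b3,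
      Finset.sum_const, Finset.card_univ, nsmul_eq_mul]
    ring
  rw [Finset.sum_congr rfl (fun z _ => e z)]
  have s1 : ∑ r ∈ R, (Fintype.card G * corr d w + (corr d (r⁻¹ * w) + corr d (r * w) + corr d (w * r) + corr d (w * r⁻¹) - 4 * corr d w) / 2
        + (2 * corr d 1 - corr d r) / 3 * corrQ r w) = Fintype.card G * R.card * corr d w +
      (∑ r ∈ R, (corr d (r * w) + corr d (w * r) - 2 * corr d w) +
     ∑ r ∈ R, 2 * (2 * corr d 1 - corr d r) / 3 * ((if w = 1 then 1 else 0) - (if w = r then 1 else 0))) := by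
    have t1 := inv_sum (fun r => corr d (r * w))
    have t2 := inv_sum (fun r => corr d (w * r))
    have t3 := inv_sum (fun r => (2 * corr d 1 - corr d r) / 3 * (if w = r then 1 else 0))
    have t4 : ∀ r : G, (2 * corr d 1 - corr d r) / 3 * corrQ r w =
      2 * ((2 * corr d 1 - corr d r) / 3 * (if w = 1 then 1 else 0)) - (2 * corr d 1 - corr d r) / 3 * (if w = r then 1 else 0)
       - (2 * corr d 1 - corr d r⁻¹) / 3 * (if w = r⁻¹ then 1 else 0) := by
      intro r; rw [corr_inv]; unfold corrQ; ring
    have t5 : ∀ r : G, 2 * (2 * corr d 1 - corr d r) / 3 * ((if w = 1 then 1 else 0) - (if w = r then 1 else 0)) = 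
      2 * ((2 * corr d 1 - corr d r) / 3 * (if w = 1 then 1 else 0)) - 2 * ((2 * corr d 1 - corr d r) / 3 * (if w = r then 1 else 0)) := by
      intro r; ring
    simp only [t4, t5, Finset.sum_add_distrib, Finset.sum_sub_distrib, ← Finset.sum_div, ← Finset.mul_sum, t1, t2, t3, 
      Finset.sum_const, nsmul_eq_mul]
    ring
  rw [s1]
  field_simp

lemma measurable_step : Measurable (fun p : (G → ℝ) × (G × G × ℝ) => gibbsStepG G p.1 p.2) := by
  have h : Measurable (fun q : (G × G) × ((G → ℝ) × ℝ) =>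
      gibbsStepG G q.2.1 (q.1.1, q.1.2, q.2.2)) := by
    apply measurable_from_prod_countable_right
    rintro ⟨g, r⟩
    rw [measurable_pi_iff]
    intro z
    unfold gibbsStepG
    dsimp only
    split_ifs <;> fun_prop
  exact h.comp (f := fun p : (G → ℝ) × (G × G × ℝ) => ((p.2.1, p.2.2.1), (p.1, p.2.2.2)))
    (by fun_prop)

lemma measurable_fold (t : ℕ) : Measurable (fun p : (G → ℝ) × (Fin t → G × G × ℝ) =>
    (List.ofFn p.2).foldl (gibbsStepG G) p.1) := by
  induction t with
  | zero => simpa using measurable_fst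
  | succ t ih =>
    simp only [List.ofFn_succ, List.foldl_cons]
    exact ih.comp (f := fun p : (G → ℝ) × (Fin (t+1) → G × G × ℝ) =>
      (gibbsStepG G p.1 (p.2 0), fun i : Fin t => p.2 i.succ))
      ((measurable_step.comp (f := fun p : (G → ℝ) × (Fin (t+1) → G × G × ℝ) => (p.1, p.2 0))
        (by fun_prop)).prodMk (by fun_prop))

lemma finite_unifOn (s : Finset G) (hs : s.Nonempty) : IsFiniteMeasure (unifOn s) := by
  unfold unifOn
  have : (s.card : ENNReal)⁻¹ ≠ ⊤ := by
    simpa using hs.card_pos.ne'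
  exact Measure.smul_finite _ this

lemma lintegral_unifOn (s : Finset G) (f : G → ENNReal) :
    ∫⁻ a, f a ∂(unifOn s) = (s.card : ENNReal)⁻¹ * ∑ a ∈ s, f a := by
  unfold unifOn
  rw [lintegral_smul_measure, lintegral_finsetSum_measure]
  simp

lemma finite_drive (R : Finset G) (hne : R.Nonempty) : IsFiniteMeasure (driveG G R) := by
  unfold driveG
  have := finite_unifOn R hne
  have := finite_unifOn (Finset.univ : Finset G) Finset.univ_nonempty
  infer_instance

lemma lintegral_drive (R : Finset G) (hne : R.Nonempty) (f : G × G × ℝ → ENNReal) (hf : Measurable f) :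
    ∫⁻ u, f u ∂(driveG G R) = (Fintype.card G : ENNReal)⁻¹ * ∑ g, ((R.card : ENNReal)⁻¹ *
      ∑ r ∈ R, ∫⁻ l in Set.Icc (0:ℝ) 1, f (g, r, l)) := by
  unfold driveG
  have := finite_unifOn R hne
  have := finite_unifOn (Finset.univ : Finset G) Finset.univ_nonempty
  rw [lintegral_prod _ hf.aemeasurable, lintegral_unifOn]
  congr 1
  apply Finset.sum_congr rfl
  intro g _
  rw [lintegral_prod _ (by fun_prop), lintegral_unifOn]

lemma lintegral_quad (A B Q a s : ℝ) (h : ∀ l : ℝ, 0 ≤ A + (l * s - a) * B + (l * s - a) ^ 2 * Q) :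
    ∫⁻ l in Set.Icc (0:ℝ) 1, ENNReal.ofReal (A + (l * s - a) * B + (l * s - a) ^ 2 * Q) =
      ENNReal.ofReal (A + (s / 2 - a) * B + (s ^ 2 / 3 - s * a + a ^ 2) * Q) ∧
    0 ≤ (A + (s / 2 - a) * B + (s ^ 2 / 3 - s * a + a ^ 2) * Q) := by
  have hc : Continuous (fun l : ℝ => A + (l * s - a) * B + (l * s - a) ^ 2 * Q) := by fun_prop
  have e : ∫ l in Set.Icc (0:ℝ) 1, (A + (l * s - a) * B + (l * s - a) ^ 2 * Q) =
      A + (s / 2 - a) * B + (s ^ 2 / 3 - s * a + a ^ 2) * Q := by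
    rw [integral_Icc_eq_integral_Ioc, ← intervalIntegral.integral_of_le zero_le_one]
    have : ∀ l : ℝ, HasDerivAt (fun l : ℝ => A * l + (l ^ 2 / 2 * s - a * l) * B +
       (l ^ 3 / 3 * s ^ 2 - l ^ 2 * s * a + a ^ 2 * l) * Q)
       (A + (l * s - a) * B + (l * s - a) ^ 2 * Q) l := by
      intro l
      have h1 := hasDerivAt_id l
      have h2 := hasDerivAt_pow 2 l
      have h3 := hasDerivAt_pow 3 l
      have := ((h1.const_mul A).add ((((h2.div_const 2).mul_const s).sub (h1.const_mul a)).mul_const B)).add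
        (((((h3.div_const 3).mul_const (s ^ 2)).sub ((h2.mul_const s).mul_const a)).add (h1.const_mul (a^2))).mul_const Q)
      exact this.congr_deriv (by push_cast; ring)
    rw [intervalIntegral.integral_eq_sub_of_hasDerivAt (fun l _ => this l) (hc.intervalIntegrable _ _)]
    ring
  constructor
  · rw [← e, ofReal_integral_eq_lintegral_ofReal (hc.continuousOn.integrableOn_compact isCompact_Icc)
      (Filter.Eventually.of_forall h)]
  · rw [← e]
    exact integral_nonneg h

lemma measurable_corr : Measurable (corr : (G → ℝ) → (G → ℝ)) := by
  rw [measurable_pi_iff]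
  intro w
  unfold corr
  fun_prop

lemma one_step (R : Finset G) (hsym : ∀ r ∈ R, r⁻¹ ∈ R) (hid : (1 : G) ∉ R) (hne : R.Nonempty)
    (L : (G → ℝ) →ₗ[ℝ] ℝ) (hL : ∀ d, 0 ≤ L (corr d)) (d : G → ℝ) :
    ∫⁻ u, ENNReal.ofReal (L (corr (gibbsStepG G d u))) ∂(driveG G R) =
      ENNReal.ofReal (L (evo R (corr d))) ∧ 0 ≤ L (evo R (corr d)) := by
  have hLm : Measurable L := (LinearMap.continuous_of_finiteDimensional L).measurable
  have hm : Measurable (fun u => ENNReal.ofReal (L (corr (gibbsStepG G d u)))) := by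
    apply ENNReal.measurable_ofReal.comp
    apply hLm.comp
    apply measurable_corr.comp
    exact measurable_step.comp (f := fun u => (d, u)) (by fun_prop)
  have key : ∀ g, ∀ r ∈ R,
      ∫⁻ l in Set.Icc (0:ℝ) 1, ENNReal.ofReal (L (corr (gibbsStepG G d (g, r, l)))) =
       ENNReal.ofReal (L (corr d + ((d (g * r) - d g) / 2) • corrP d g r
      + ((d g ^ 2 - d g * d (g * r) + d (g * r) ^ 2) / 3) • corrQ r)) ∧
      0 ≤ (L (corr d + ((d (g * r) - d g) / 2) • corrP d g r
      + ((d g ^ 2 - d g * d (g * r) + d (g * r) ^ 2) / 3) • corrQ r)) := by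
    intro g r hr
    have hr1 : r ≠ 1 := fun h => hid (h ▸ hr)
    have e : ∀ l : ℝ, L (corr (gibbsStepG G d (g, r, l))) = L (corr d) +
       (l * (d g + d (g * r)) - d g) * L (corrP d g r) + (l * (d g + d (g * r)) - d g) ^ 2 * L (corrQ r) := by
      intro l
      rw [corr_step d g r l hr1]
      simp
    have := lintegral_quad (L (corr d)) (L (corrP d g r)) (L (corrQ r)) (d g) (d g + d (g * r))
      (fun l => by rw [← e]; exact hL _)
    simp only [e]
    rw [map_add, map_add, map_smul, map_smul, smul_eq_mul, smul_eq_mul]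
    have e2 : L (corr d) + (d (g * r) - d g) / 2 * L (corrP d g r) +
        (d g ^ 2 - d g * d (g * r) + d (g * r) ^ 2) / 3 * L (corrQ r) =
        L (corr d) + ((d g + d (g * r)) / 2 - d g) * L (corrP d g r) +
        ((d g + d (g * r)) ^ 2 / 3 - (d g + d (g * r)) * d g + d g ^ 2) * L (corrQ r) := by ring
    rw [e2]
    exact this
  rw [lintegral_drive R hne _ hm, ← evo_corr R hsym hne d, map_smul, map_sum, smul_eq_mul]
  simp only [map_sum L]
  have hnn : 0 ≤ ∑ g, ∑ r ∈ R, (L (corr d + ((d (g * r) - d g) / 2) • corrP d g r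
      + ((d g ^ 2 - d g * d (g * r) + d (g * r) ^ 2) / 3) • corrQ r)) :=
    Finset.sum_nonneg fun g _ => Finset.sum_nonneg fun r hr => (key g r hr).2
  refine ⟨?_, mul_nonneg (by positivity) hnn⟩
  have hn : (0:ℝ) < (Fintype.card G : ℝ) := by exact_mod_cast Fintype.card_pos
  have hm : (0:ℝ) < (R.card : ℝ) := by exact_mod_cast hne.card_pos
  rw [ENNReal.ofReal_mul (by positivity), mul_inv, ENNReal.ofReal_mul (by positivity),
    ENNReal.ofReal_inv_of_pos hn, ENNReal.ofReal_inv_of_pos hm, ENNReal.ofReal_natCast,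
    ENNReal.ofReal_natCast, ENNReal.ofReal_sum_of_nonneg
      (fun g _ => Finset.sum_nonneg fun r hr => (key g r hr).2), ← Finset.mul_sum, mul_assoc]
  congr 2
  apply Finset.sum_congr rfl
  intro g _
  rw [ENNReal.ofReal_sum_of_nonneg (fun r hr => (key g r hr).2)]
  exact Finset.sum_congr rfl fun r hr => (key g r hr).1

lemma corr_one (d : G → ℝ) : corr d 1 = ∑ g, d g ^ 2 := by
  simp [corr, sq]

lemma all_steps (R : Finset G) (hsym : ∀ r ∈ R, r⁻¹ ∈ R) (hid : (1 : G) ∉ R) (hne : R.Nonempty)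
    (t : ℕ) : ∀ d : G → ℝ,
    ∫⁻ ω : Fin t → G × G × ℝ, ENNReal.ofReal (∑ g : G, ((List.ofFn ω).foldl (gibbsStepG G) d g) ^ 2)
        ∂(Measure.pi fun _ => driveG G R) = ENNReal.ofReal (((evo R) ^ t) (corr d) 1) ∧
    0 ≤ ((evo R) ^ t) (corr d) 1 := by
  have := finite_drive R hne
  induction t with
  | zero =>
    intro d
    constructor
    · rw [Measure.pi_of_empty]
      simp [corr_one]
    · simp only [pow_zero, Module.End.one_apply, corr_one]; positivity
  | succ t ih =>
    intro d
    have os := one_step R hsym hid hne ((LinearMap.proj 1).comp ((evo R) ^ t)) (fun d => (ih d).2) d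
    simp only [LinearMap.comp_apply, LinearMap.proj_apply] at os
    rw [pow_succ, Module.End.mul_apply, ← os.1]
    refine ⟨?_, os.2⟩
    have mp := (measurePreserving_piFinSuccAbove (fun _ : Fin (t+1) => driveG G R) 0).symm
    have mm : Measurable fun p : (G × G × ℝ) × (Fin t → G × G × ℝ) => ENNReal.ofReal
       (∑ g : G, ((List.ofFn p.2).foldl (gibbsStepG G) (gibbsStepG G d p.1) g) ^ 2) := by
      have h0 := (measurable_fold (G := G) t).comp (f := fun p : (G × G × ℝ) × (Fin t → G × G × ℝ) =>
        (gibbsStepG G d p.1, p.2)) ((measurable_step.comp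
          (f := fun p : (G × G × ℝ) × (Fin t → G × G × ℝ) => (d, p.1)) (by fun_prop)).prodMk (by fun_prop))
      rw [measurable_pi_iff] at h0
      apply ENNReal.measurable_ofReal.comp
      exact Finset.measurable_sum _ fun g _ => (h0 g).pow_const 2
    refine (mp.lintegral_comp_emb (MeasurableEquiv.measurableEmbedding _) _).symm.trans ?_
    simp only [MeasurableEquiv.piFinSuccAbove_symm_apply, Fin.insertNthEquiv,
            Fin.insertNth_zero, Equiv.coe_fn_mk, List.ofFn_succ, Fin.cons_succ,
            Fin.zero_succAbove, cast_eq, Fin.cons_zero, List.foldl_cons]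
    refine (lintegral_prod _ mm.aemeasurable).trans ?_
    refine lintegral_congr fun u => ?_
    exact (ih (gibbsStepG G d u)).1

lemma step_sub (x y : G → ℝ) (u : G × G × ℝ) :
    gibbsStepG G (x - y) u = gibbsStepG G x u - gibbsStepG G y u := by
  funext z
  simp only [gibbsStepG, Pi.sub_apply]
  split_ifs <;> ring

lemma fold_sub (l : List (G × G × ℝ)) : ∀ x y : G → ℝ,
    l.foldl (gibbsStepG G) (x - y) = l.foldl (gibbsStepG G) x - l.foldl (gibbsStepG G) y := by
  induction l with
  | nil => intros; rfl
  | cons u l ih => intro x y; simp only [List.foldl_cons, step_sub, ih]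

/-- right Dirichlet form -/
def dirR (R : Finset G) (v : G → ℝ) : ℝ := ∑ r ∈ R, ∑ w, (v w - v (w * r)) ^ 2

/-- left Dirichlet form -/
def dirL (R : Finset G) (v : G → ℝ) : ℝ := ∑ r ∈ R, ∑ w, (v w - v (r * w)) ^ 2

lemma dirR_nonneg (R : Finset G) (v : G → ℝ) : 0 ≤ dirR R v := by unfold dirR; positivity

lemma sum_mulR (f : G → ℝ) (r : G) : ∑ w, f (w * r) = ∑ w, f w :=
  Equiv.sum_comp (Equiv.mulRight r) f

lemma sum_mulL (f : G → ℝ) (r : G) : ∑ w, f (r * w) = ∑ w, f w :=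
  Equiv.sum_comp (Equiv.mulLeft r) f

lemma inv_sumR (R : Finset G) (hsym : ∀ r ∈ R, r⁻¹ ∈ R) (f : G → ℝ) :
    ∑ r ∈ R, f r⁻¹ = ∑ r ∈ R, f r :=
  Finset.sum_nbij' (fun r => r⁻¹) (fun r => r⁻¹) hsym hsym (by simp) (by simp) (by simp)

lemma dirR_le (R : Finset G) (v : G → ℝ) : dirR R v ≤ 4 * R.card * ∑ w, v w ^ 2 := by
  unfold dirR
  have : ∀ r ∈ R, ∑ w, (v w - v (w * r)) ^ 2 ≤ 4 * ∑ w, v w ^ 2 := by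
    intro r _
    calc ∑ w, (v w - v (w * r)) ^ 2 ≤ ∑ w, (2 * v w ^ 2 + 2 * v (w * r) ^ 2) :=
          Finset.sum_le_sum fun w _ => by nlinarith [sq_nonneg (v w + v (w * r))]
      _ = 4 * ∑ w, v w ^ 2 := by
          rw [Finset.sum_add_distrib, ← Finset.mul_sum, ← Finset.mul_sum,
            sum_mulR (fun w => v w ^ 2)]
          ring
  refine (Finset.sum_le_sum this).trans ?_
  simp only [Finset.sum_const, nsmul_eq_mul]
  linarith

lemma dirL_eq (R : Finset G) (hsym : ∀ r ∈ R, r⁻¹ ∈ R) (v : G → ℝ) :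
    dirL R v = dirR R (fun w => v w⁻¹) := by
  unfold dirL dirR
  rw [← inv_sumR R hsym (fun r => ∑ w, (v w - v (r * w)) ^ 2)]
  refine Finset.sum_congr rfl fun r _ => ?_
  rw [← Equiv.sum_comp (Equiv.inv G)]
  simp

lemma khat_quad (R : Finset G) (hid : (1 : G) ∉ R) (hne : R.Nonempty) (v : G → ℝ) :
    ∑ g, ∑ h, v g * KhatM G R g h * v h =
      ∑ g, v g ^ 2 - ((Fintype.card G : ℝ) * R.card)⁻¹ * dirR R v := by
  have hn : (Fintype.card G : ℝ) ≠ 0 := by exact_mod_cast Fintype.card_ne_zero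
  have hm : (R.card : ℝ) ≠ 0 := by exact_mod_cast hne.card_pos.ne'
  have hK : ∀ g h : G, KhatM G R g h = (if g = h then 1 - 2 / (Fintype.card G : ℝ) else 0) +
      ∑ r ∈ R, if g⁻¹ * h = r then 2 / ((Fintype.card G : ℝ) * R.card) else 0 := by
    intro g h
    rw [Finset.sum_ite_eq]
    unfold KhatM
    by_cases hgh : g = h
    · subst hgh; simp [hid]
    · simp [hgh]
  have e1 : ∀ g, ∑ h, v g * KhatM G R g h * v h = (1 - 2 / (Fintype.card G : ℝ)) * v g ^ 2 +
      2 / ((Fintype.card G : ℝ) * R.card) * ∑ r ∈ R, v g * v (g * r) := by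
    intro g
    simp only [hK, mul_add, add_mul, Finset.sum_add_distrib, Finset.mul_sum, Finset.sum_mul]
    rw [Finset.sum_comm]
    congr 1
    · simp; ring
    · refine Finset.sum_congr rfl fun r _ => ?_
      simp only [inv_mul_eq_iff_eq_mul]
      simp; ring
  have e2 : dirR R v = 2 * R.card * ∑ g, v g ^ 2 - 2 * ∑ r ∈ R, ∑ g, v g * v (g * r) := by
    unfold dirR
    have : ∀ r ∈ R, ∑ w, (v w - v (w * r)) ^ 2 = 2 * ∑ g, v g ^ 2 - 2 * ∑ g, v g * v (g * r) := by
      intro r _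
      have h := sum_mulR (fun w => v w ^ 2) r
      simp only [sub_sq, Finset.sum_add_distrib, Finset.sum_sub_distrib, h, mul_assoc, ← Finset.mul_sum]
      ring
    rw [Finset.sum_congr rfl this, Finset.sum_sub_distrib, ← Finset.mul_sum]
    simp only [Finset.sum_const, nsmul_eq_mul, ← Finset.mul_sum]
    ring
  rw [Finset.sum_congr rfl (fun g _ => e1 g), Finset.sum_add_distrib, ← Finset.mul_sum, ← Finset.mul_sum,
    Finset.sum_comm, e2]
  field_simp
  ring

lemma gap_nonneg (R : Finset G) (hid : (1 : G) ∉ R) (hne : R.Nonempty) : 0 ≤ gapHat G R := by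
  unfold gapHat
  rw [sub_nonneg]
  apply Real.sSup_le _ zero_le_one
  rintro _ ⟨v, -, h2, rfl⟩
  rw [khat_quad R hid hne, h2]
  have := mul_nonneg (inv_nonneg.2 (by positivity : (0:ℝ) ≤ (Fintype.card G : ℝ) * R.card)) (dirR_nonneg R v)
  linarith

lemma gap_bdd (R : Finset G) (hid : (1 : G) ∉ R) (hne : R.Nonempty) :
    BddAbove {lam : ℝ | ∃ v : G → ℝ, ∑ g, v g = 0 ∧ ∑ g, (v g) ^ 2 = 1 ∧
    lam = ∑ g, ∑ h, v g * KhatM G R g h * v h} := by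
  refine ⟨1, ?_⟩
  rintro _ ⟨v, -, h2, rfl⟩
  rw [khat_quad R hid hne, h2]
  have := mul_nonneg (inv_nonneg.2 (by positivity : (0:ℝ) ≤ (Fintype.card G : ℝ) * R.card)) (dirR_nonneg R v)
  linarith

lemma c_dir_le (R : Finset G) (hne : R.Nonempty) (v : G → ℝ) :
    ((Fintype.card G : ℝ) * R.card)⁻¹ * dirR R v ≤ 4 / (Fintype.card G : ℝ) * ∑ w, v w ^ 2 := by
  have hn : (0:ℝ) < (Fintype.card G : ℝ) := by exact_mod_cast Fintype.card_pos
  have hm : (0:ℝ) < (R.card : ℝ) := by exact_mod_cast hne.card_pos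
  calc _ ≤ ((Fintype.card G : ℝ) * R.card)⁻¹ * (4 * R.card * ∑ w, v w ^ 2) :=
        mul_le_mul_of_nonneg_left (dirR_le R v) (by positivity)
    _ = _ := by field_simp

lemma gap_le_two (R : Finset G) (hid : (1 : G) ∉ R) (hne : R.Nonempty) (hn2 : 2 ≤ Fintype.card G) :
    gapHat G R ≤ 2 := by
  unfold gapHat
  have hn : (2:ℝ) ≤ (Fintype.card G : ℝ) := by exact_mod_cast hn2
  rcases Set.eq_empty_or_nonempty {lam : ℝ | ∃ v : G → ℝ, ∑ g, v g = 0 ∧ ∑ g, (v g) ^ 2 = 1 ∧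
    lam = ∑ g, ∑ h, v g * KhatM G R g h * v h} with h | ⟨a, ha⟩
  · rw [h]; simp
  · have h1 := le_csSup (gap_bdd R hid hne) ha
    obtain ⟨v, -, h2, rfl⟩ := ha
    rw [khat_quad R hid hne, h2] at h1
    have h3 := c_dir_le R hne v
    rw [h2] at h3
    have h4 : 4 / (Fintype.card G : ℝ) ≤ 2 := by
      rw [div_le_iff₀ (by linarith)]; linarith
    linarith

lemma gap_le_dir (R : Finset G) (hid : (1 : G) ∉ R) (hne : R.Nonempty) (v : G → ℝ)
    (hv : ∑ g, v g = 0) :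
    gapHat G R * ∑ g, v g ^ 2 ≤ ((Fintype.card G : ℝ) * R.card)⁻¹ * dirR R v := by
  have hnn : 0 ≤ ((Fintype.card G : ℝ) * R.card)⁻¹ * dirR R v :=
    mul_nonneg (inv_nonneg.2 (by positivity)) (dirR_nonneg R v)
  have h0 : 0 ≤ ∑ g, v g ^ 2 := by positivity
  rcases h0.eq_or_lt with h | h
  · rw [← h]; simpa using hnn
  · set s := ∑ g, v g ^ 2 with hs
    have hsq : Real.sqrt s ^ 2 = s := Real.sq_sqrt h0
    have hsp : 0 < Real.sqrt s := Real.sqrt_pos.2 h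
    have q1 : ∑ g, (v g / Real.sqrt s) ^ 2 = 1 := by
      simp only [div_pow, ← Finset.sum_div, hsq, ← hs]
      exact div_self h.ne'
    have mem := le_csSup (gap_bdd R hid hne) (a := ∑ g, ∑ k, (v g / Real.sqrt s) * KhatM G R g k * (v k / Real.sqrt s))
      ⟨fun g => v g / Real.sqrt s, by rw [← Finset.sum_div, hv, zero_div], q1, rfl⟩
    rw [khat_quad R hid hne (fun g => v g / Real.sqrt s), q1] at mem
    have q2 : dirR R (fun g => v g / Real.sqrt s) = dirR R v / s := by
      simp only [dirR, ← sub_div, div_pow, hsq, Finset.sum_div]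
    rw [q2] at mem
    have : gapHat G R ≤ ((Fintype.card G : ℝ) * R.card)⁻¹ * (dirR R v / s) := by
      unfold gapHat; linarith
    rw [← mul_div_assoc, le_div_iff₀ h] at this
    exact this

/-- modified generator -/
def nop (R : Finset G) (F : G → ℝ) : G → ℝ := fun w =>
  ((Fintype.card G : ℝ) * R.card)⁻¹ * (∑ r ∈ R, (2 * F w - F (r * w) - F (w * r)) -
    2 / 3 * ∑ r ∈ R, (F 1 - F r) * ((if w = 1 then 1 else 0) - (if w = r then 1 else 0)))

/-- modified Dirichlet form -/
def bil (R : Finset G) (F H : G → ℝ) : ℝ :=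
  ((Fintype.card G : ℝ) * R.card)⁻¹ * ∑ r ∈ R, (1 / 2 * ∑ w, ((F w - F (r * w)) * (H w - H (r * w)) +
    (F w - F (w * r)) * (H w - H (w * r))) - 2 / 3 * ((F 1 - F r) * (H 1 - H r)))

lemma nop_eq (R : Finset G) (hsym : ∀ r ∈ R, r⁻¹ ∈ R) (hid : (1 : G) ∉ R) (C : G → ℝ) (w : G) :
    evo R C w = C w - nop R (fun w => if w = 1 then C 1 / 2 else C w) w := by
  rw [evo_apply, nop]
  have h1 : ∀ r ∈ R, r ≠ 1 := fun r hr h => hid (h ▸ hr)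
  set F : G → ℝ := fun w => if w = 1 then C 1 / 2 else C w with hF
  have hC : ∀ z, C z = F z + F 1 * (if z = 1 then 1 else 0) := by
    intro z
    by_cases hz : z = 1
    · subst hz; simp [hF]
    · simp [hF, hz]
  have t := inv_sumR R hsym (fun r => F 1 * (if w = r then 1 else 0))
  have e : ∑ r ∈ R, (C (r * w) + C (w * r) - 2 * C w) = ∑ r ∈ R, (F (r * w) + F (w * r) - 2 * F w
     + 2 * (F 1 * (if w = r then 1 else 0)) - 2 * F 1 * (if w = 1 then 1 else 0)) := by
    have : ∀ r ∈ R, (C (r * w) + C (w * r) - 2 * C w) = (F (r * w) + F (w * r) - 2 * F w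
       + 2 * (F 1 * (if w = r⁻¹ then 1 else 0)) - 2 * F 1 * (if w = 1 then 1 else 0)) := by
      intro r _
      have a1 : r * w = 1 ↔ w = r⁻¹ := by rw [mul_eq_one_iff_inv_eq, eq_comm]
      have a2 : w * r = 1 ↔ w = r⁻¹ := mul_eq_one_iff_eq_inv
      rw [hC (r * w), hC (w * r), hC w]
      simp only [a1, a2]
      ring
    rw [Finset.sum_congr rfl this]
    simp only [Finset.sum_add_distrib, Finset.sum_sub_distrib, ← Finset.mul_sum] at t ⊢
    rw [t]
  rw [e]
  have e' : ∀ r ∈ R, 2 * (2 * C 1 - C r) / 3 * ((if w = 1 then 1 else 0) - (if w = r then 1 else 0)) =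
     2 * (4 * F 1 - F r) / 3 * ((if w = 1 then 1 else 0) - (if w = r then 1 else 0)) := by
    intro r hr
    rw [hC 1, hC r]
    simp [h1 r hr]
    left; ring
  rw [Finset.sum_congr rfl e', sub_eq_add_neg, ← mul_neg, neg_sub, Finset.mul_sum, ← Finset.sum_add_distrib,
    ← Finset.sum_sub_distrib]
  congr 2
  refine Finset.sum_congr rfl fun r _ => ?_
  ring

lemma sum_nop (R : Finset G) (hsym : ∀ r ∈ R, r⁻¹ ∈ R) (F H : G → ℝ) :
    ∑ w, H w * nop R F w = bil R F H := by
  unfold nop bil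
  simp only [mul_left_comm (H _) (_⁻¹), ← Finset.mul_sum]
  congr 1
  have hA : ∀ r, 1 / 2 * ∑ w, ((F w - F (r * w)) * (H w - H (r * w)) +
    (F w - F (w * r)) * (H w - H (w * r))) = ∑ w, H w * (2 * F w) - 1 / 2 * ∑ w, H w * F (r * w)
      - 1 / 2 * ∑ w, H w * F (r⁻¹ * w) - 1 / 2 * ∑ w, H w * F (w * r) - 1 / 2 * ∑ w, H w * F (w * r⁻¹) := by
    intro r
    have b1 := sum_mulL (fun w => H w * F w) r
    have b2 := sum_mulR (fun w => H w * F w) r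
    have b3 := sum_mulL (fun w => H w * F (r⁻¹ * w)) r
    have b4 := sum_mulR (fun w => H w * F (w * r⁻¹)) r
    simp only [inv_mul_cancel_left, mul_inv_cancel_right] at b3 b4
    rw [← b3, ← b4]
    have : ∀ w, ((F w - F (r * w)) * (H w - H (r * w)) +
      (F w - F (w * r)) * (H w - H (w * r))) = 2 * (H w * F w) + H (r * w) * F (r * w) + H (w * r) * F (w * r)
       - H w * F (r * w) - H (r * w) * F w - H w * F (w * r) - H (w * r) * F w := by intro w; ring
    simp only [this, Finset.sum_add_distrib, Finset.sum_sub_distrib, ← Finset.mul_sum, b1, b2,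
      mul_left_comm (H _) (2:ℝ)]
    ring
  have hB : ∑ w, H w * (∑ r ∈ R, (2 * F w - F (r * w) - F (w * r)) -
      2 / 3 * ∑ r ∈ R, (F 1 - F r) * ((if w = 1 then 1 else 0) - (if w = r then 1 else 0))) =
      ∑ r ∈ R, (∑ w, H w * (2 * F w) - ∑ w, H w * F (r * w) - ∑ w, H w * F (w * r)
        - 2 / 3 * ((F 1 - F r) * (H 1 - H r))) := by
    simp only [Finset.mul_sum, ← Finset.sum_sub_distrib]
    rw [Finset.sum_comm]
    refine Finset.sum_congr rfl fun r _ => ?_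
    have h1 : H 1 = ∑ w, H w * (if w = 1 then 1 else 0) := by simp
    have h2 : H r = ∑ w, H w * (if w = r then 1 else 0) := by simp
    rw [h1, h2, ← Finset.sum_sub_distrib, Finset.mul_sum, Finset.mul_sum, ← Finset.sum_sub_distrib]
    refine Finset.sum_congr rfl fun w _ => ?_
    ring
  rw [hB]
  simp only [hA, Finset.sum_sub_distrib, ← Finset.mul_sum]
  rw [inv_sumR R hsym (fun r => ∑ w, H w * F (r * w)), inv_sumR R hsym (fun r => ∑ w, H w * F (w * r))]
  ring

lemma bil_self (R : Finset G) (F : G → ℝ) : bil R F F = ((Fintype.card G : ℝ) * R.card)⁻¹ *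
    (1 / 2 * (dirL R F + dirR R F) - 2 / 3 * ∑ r ∈ R, (F 1 - F r) ^ 2) := by
  unfold bil dirL dirR
  simp only [Finset.sum_sub_distrib, ← Finset.mul_sum, Finset.sum_add_distrib, ← sq]

lemma bil_sub (R : Finset G) (F H : G → ℝ) :
    bil R (F - H) (F - H) = bil R F F - 2 * bil R F H + bil R H H := by
  unfold bil
  rw [mul_left_comm 2, ← mul_sub, ← mul_add, Finset.mul_sum _ _ (2:ℝ), ← Finset.sum_sub_distrib, ← Finset.sum_add_distrib]
  congr 1
  refine Finset.sum_congr rfl fun r _ => ?_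
  have : ∑ w, (((F - H) w - (F - H) (r * w)) * ((F - H) w - (F - H) (r * w)) +
    ((F - H) w - (F - H) (w * r)) * ((F - H) w - (F - H) (w * r))) =
     ∑ w, ((F w - F (r * w)) * (F w - F (r * w)) + (F w - F (w * r)) * (F w - F (w * r)))
     - 2 * ∑ w, ((F w - F (r * w)) * (H w - H (r * w)) + (F w - F (w * r)) * (H w - H (w * r)))
     + ∑ w, ((H w - H (r * w)) * (H w - H (r * w)) + (H w - H (w * r)) * (H w - H (w * r))) := by
    rw [Finset.mul_sum, ← Finset.sum_sub_distrib, ← Finset.sum_add_distrib]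
    refine Finset.sum_congr rfl fun w _ => ?_
    simp only [Pi.sub_apply]
    ring
  rw [this]
  simp only [Pi.sub_apply]
  ring

lemma two_S_le_dirR (R : Finset G) (hsym : ∀ r ∈ R, r⁻¹ ∈ R) (hid : (1 : G) ∉ R) (F : G → ℝ) :
    2 * ∑ r ∈ R, (F 1 - F r) ^ 2 ≤ dirR R F := by
  have h := inv_sumR R hsym (fun r => (F 1 - F r) ^ 2)
  calc 2 * ∑ r ∈ R, (F 1 - F r) ^ 2 = ∑ r ∈ R, ((F 1 - F r) ^ 2 + (F 1 - F r⁻¹) ^ 2) := by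
        rw [Finset.sum_add_distrib, h]; ring
    _ ≤ dirR R F := by
        refine Finset.sum_le_sum fun r hr => ?_
        have hr1 : r⁻¹ ≠ 1 := fun h => hid (inv_eq_one.1 h ▸ hr)
        have := Finset.sum_le_sum_of_subset_of_nonneg (Finset.subset_univ {(1 : G), r⁻¹})
          (f := fun w => (F w - F (w * r)) ^ 2) (fun _ _ _ => sq_nonneg _)
        rw [Finset.sum_pair hr1.symm] at this
        simp only [one_mul, inv_mul_cancel] at this
        nlinarith

lemma two_S_le_dirL (R : Finset G) (hsym : ∀ r ∈ R, r⁻¹ ∈ R) (hid : (1 : G) ∉ R) (F : G → ℝ) :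
    2 * ∑ r ∈ R, (F 1 - F r) ^ 2 ≤ dirL R F := by
  rw [dirL_eq R hsym]
  refine le_trans (le_of_eq ?_) (two_S_le_dirR R hsym hid _)
  simp only [inv_one]
  rw [inv_sumR R hsym (fun r => (F 1 - F r) ^ 2)]

lemma bil_ge (R : Finset G) (hsym : ∀ r ∈ R, r⁻¹ ∈ R) (hid : (1 : G) ∉ R) (F : G → ℝ) :
    1 / 3 * (((Fintype.card G : ℝ) * R.card)⁻¹ * dirL R F + ((Fintype.card G : ℝ) * R.card)⁻¹ * dirR R F)
      ≤ bil R F F := by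
  rw [bil_self, ← mul_add, mul_left_comm]
  apply mul_le_mul_of_nonneg_left _ (by positivity)
  linarith [two_S_le_dirR R hsym hid F, two_S_le_dirL R hsym hid F]

lemma bil_nonneg (R : Finset G) (hsym : ∀ r ∈ R, r⁻¹ ∈ R) (hid : (1 : G) ∉ R) (F : G → ℝ) :
    0 ≤ bil R F F := by
  refine le_trans ?_ (bil_ge R hsym hid F)
  have hL : 0 ≤ dirL R F := by unfold dirL; positivity
  have hR := dirR_nonneg R F
  have hc : 0 ≤ ((Fintype.card G : ℝ) * R.card)⁻¹ :=
    inv_nonneg.2 (mul_nonneg (Nat.cast_nonneg _) (Nat.cast_nonneg _))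
  exact mul_nonneg (by norm_num) (add_nonneg (mul_nonneg hc hL) (mul_nonneg hc hR))

lemma bil_le (R : Finset G) (hsym : ∀ r ∈ R, r⁻¹ ∈ R) (hne : R.Nonempty) (hn4 : 4 ≤ Fintype.card G)
    (F : G → ℝ) : bil R F F ≤ ∑ w, F w ^ 2 := by
  have h1 := c_dir_le R hne F
  have h2 := c_dir_le R hne (fun w => F w⁻¹)
  have hinv : ∑ w, F w⁻¹ ^ 2 = ∑ w, F w ^ 2 := Equiv.sum_comp (Equiv.inv G) (fun w => F w ^ 2)
  rw [← dirL_eq R hsym, hinv] at h2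
  have hn : (4:ℝ) ≤ (Fintype.card G : ℝ) := by exact_mod_cast hn4
  have h4 : 4 / (Fintype.card G : ℝ) ≤ 1 := by
    rw [div_le_iff₀ (by linarith)]; linarith
  have h5 : 4 / (Fintype.card G : ℝ) * ∑ w, F w ^ 2 ≤ 1 * ∑ w, F w ^ 2 :=
    mul_le_mul_of_nonneg_right h4 (by positivity)
  have h6 : 0 ≤ ((Fintype.card G : ℝ) * R.card)⁻¹ * ∑ r ∈ R, (F 1 - F r) ^ 2 := by positivity
  rw [bil_self]
  linarith

lemma dir_ge_var (R : Finset G) (hid : (1 : G) ∉ R) (hne : R.Nonempty) (F : G → ℝ) (a : ℝ)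
    (ha : ∑ g, F g = Fintype.card G * a) :
    gapHat G R * ∑ g, (F g - a) ^ 2 ≤ ((Fintype.card G : ℝ) * R.card)⁻¹ * dirR R F := by
  have := gap_le_dir R hid hne (fun g => F g - a) (by
    rw [Finset.sum_sub_distrib, ha]; simp)
  simpa [dirR] using this

lemma bil_gap (R : Finset G) (hsym : ∀ r ∈ R, r⁻¹ ∈ R) (hid : (1 : G) ∉ R) (hne : R.Nonempty)
    (F : G → ℝ) (hF : ∑ w, F w + F 1 = 0) :
    gapHat G R / 3 * (∑ w, F w ^ 2 + F 1 ^ 2) ≤ bil R F F := by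
  have hn : (0:ℝ) < (Fintype.card G : ℝ) := by exact_mod_cast Fintype.card_pos
  obtain ⟨a, ha⟩ : ∃ a : ℝ, ∑ g, F g = Fintype.card G * a :=
    ⟨(∑ g, F g) / Fintype.card G, by field_simp⟩
  have h1 := dir_ge_var R hid hne F a ha
  have h2 := dir_ge_var R hid hne (fun w => F w⁻¹) a (by rw [← ha]; exact Equiv.sum_comp (Equiv.inv G) F)
  have hinv : ∑ w, (F w⁻¹ - a) ^ 2 = ∑ w, (F w - a) ^ 2 :=
    Equiv.sum_comp (Equiv.inv G) (fun w => (F w - a) ^ 2)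
  rw [← dirL_eq R hsym, hinv] at h2
  have h3 := bil_ge R hsym hid F
  have h4 : ∑ g, (F g - a) ^ 2 = ∑ g, F g ^ 2 - 2 * a * ∑ g, F g + Fintype.card G * a ^ 2 := by
    simp only [sub_sq, Finset.sum_add_distrib, Finset.sum_sub_distrib, Finset.mul_sum, Finset.sum_const,
      Finset.card_univ, nsmul_eq_mul]
    congr 2
    exact Finset.sum_congr rfl fun _ _ => by ring
  have h5 : (F 1 - a) ^ 2 ≤ ∑ g, (F g - a) ^ 2 :=
    Finset.single_le_sum (f := fun g => (F g - a) ^ 2) (fun _ _ => sq_nonneg _) (Finset.mem_univ 1)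
  have h6 : ∑ w, F w ^ 2 + F 1 ^ 2 ≤ 2 * ∑ g, (F g - a) ^ 2 := by
    have : ∑ g, F g = - F 1 := by linarith
    rw [this] at h4
    have : 0 ≤ Fintype.card G * a ^ 2 := by positivity
    nlinarith
  have h7 := mul_le_mul_of_nonneg_left h6 (gap_nonneg R hid hne)
  linarith

/-- weighted norm -/
def phi (C : G → ℝ) : ℝ := ∑ w, C w ^ 2 - C 1 ^ 2 / 2

lemma phi_contract (R : Finset G) (hsym : ∀ r ∈ R, r⁻¹ ∈ R) (hid : (1 : G) ∉ R) (hne : R.Nonempty)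
    (hn4 : 4 ≤ Fintype.card G) (C : G → ℝ) (hC : ∑ w, C w = 0) :
    phi (evo R C) ≤ (1 - gapHat G R / 3) * phi C := by
  have hev := nop_eq R hsym hid C
  set F : G → ℝ := fun w => if w = 1 then C 1 / 2 else C w with hF
  have hF1 : C 1 = 2 * F 1 := by simp only [hF, if_true]; ring
  have hCF : ∀ z, C z = F z + (if z = 1 then F 1 else 0) := by
    intro z
    by_cases hz : z = 1
    · subst hz; simp [hF]
    · simp [hF, hz]
  clear_value F
  have s1 : ∑ w, F w + F 1 = 0 := by
    rw [← hC, Finset.sum_congr rfl (fun z _ => hCF z), Finset.sum_add_distrib]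
    simp
  have s2 : phi C = ∑ w, F w ^ 2 + F 1 ^ 2 := by
    have : ∀ z, C z ^ 2 = F z ^ 2 + (if z = 1 then 3 * F 1 ^ 2 else 0) := by
      intro z
      rw [hCF z]
      split_ifs with h
      · subst h; ring
      · ring
    rw [phi, Finset.sum_congr rfl (fun z _ => this z), Finset.sum_add_distrib, hF1]
    simp; ring
  set N := nop R F with hN
  have n1 : ∑ w, F w * N w = bil R F F := sum_nop R hsym F F
  have n2 : ∑ w, N w ^ 2 = bil R F N := by
    rw [← sum_nop R hsym F N]; simp only [sq]; rfl
  have n3 := bil_le R hsym hne hn4 N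
  have n4 : 0 ≤ bil R (F - N) (F - N) := bil_nonneg R hsym hid (F - N)
  rw [bil_sub R] at n4
  have n5 : ∑ w, C w * N w = ∑ w, F w * N w + F 1 * N 1 := by
    have : ∀ w, C w * N w = F w * N w + (if w = 1 then F 1 * N 1 else 0) := by
      intro w
      rw [hCF w]
      split_ifs with h
      · subst h; ring
      · ring
    rw [Finset.sum_congr rfl (fun w _ => this w), Finset.sum_add_distrib]
    simp
  have n6 : phi (evo R C) = phi C - 2 * bil R F F + ∑ w, N w ^ 2 - N 1 ^ 2 / 2 := by
    have : ∑ w, (C w - N w) ^ 2 = ∑ w, C w ^ 2 - 2 * ∑ w, C w * N w + ∑ w, N w ^ 2 := by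
      rw [Finset.mul_sum, ← Finset.sum_sub_distrib, ← Finset.sum_add_distrib]
      exact Finset.sum_congr rfl fun _ _ => by ring
    unfold phi
    have hev2 : evo R C = fun w => C w - N w := funext hev
    rw [hev2]
    dsimp only
    rw [this, n5, n1, hF1]
    ring
  have n7 := bil_gap R hsym hid hne F s1
  rw [← s2] at n7
  have n8 := sq_nonneg (N 1)
  nlinarith

lemma sum_evo (R : Finset G) (C : G → ℝ) : ∑ w, evo R C w = ∑ w, C w := by
  simp only [evo_apply]
  rw [Finset.sum_add_distrib, ← Finset.mul_sum, Finset.sum_add_distrib, Finset.sum_comm,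
    Finset.sum_comm (s := Finset.univ) (t := R)]
  have h1 : ∀ r ∈ R, ∑ w, (C (r * w) + C (w * r) - 2 * C w) = 0 := by
    intro r _
    rw [Finset.sum_sub_distrib, Finset.sum_add_distrib, sum_mulL C, sum_mulR C, ← Finset.mul_sum]
    ring
  have h2 : ∀ r ∈ R, ∑ w, 2 * (2 * C 1 - C r) / 3 * ((if w = 1 then 1 else 0) - (if w = r then 1 else 0)) = 0 := by
    intro r _
    rw [← Finset.mul_sum, Finset.sum_sub_distrib]
    simp
  rw [Finset.sum_eq_zero h1, Finset.sum_eq_zero h2]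
  simp

lemma sum_corr (d : G → ℝ) (hd : ∑ g, d g = 0) : ∑ w, corr d w = 0 := by
  unfold corr
  rw [Finset.sum_comm]
  refine Finset.sum_eq_zero fun z _ => ?_
  rw [← Finset.mul_sum, sum_mulL d, hd, mul_zero]

lemma corr_le (d : G → ℝ) (w : G) : corr d w ^ 2 ≤ (∑ g, d g ^ 2) ^ 2 := by
  have := Finset.sum_mul_sq_le_sq_mul_sq Finset.univ d (fun z => d (z * w))
  rw [sum_mulR (fun z => d z ^ 2)] at this
  rw [sq (∑ g, d g ^ 2)]
  exact this

lemma sum_pow_evo (R : Finset G) (C : G → ℝ) (hC : ∑ w, C w = 0) (t : ℕ) :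
    ∑ w, ((evo R) ^ t) C w = 0 := by
  induction t with
  | zero => simpa using hC
  | succ t ih => rw [pow_succ', Module.End.mul_apply, sum_evo, ih]

lemma main_large (R : Finset G) (hsym : ∀ r ∈ R, r⁻¹ ∈ R) (hid : (1 : G) ∉ R) (hne : R.Nonempty)
    (hn4 : 4 ≤ Fintype.card G) (d : G → ℝ) (hd : ∑ g, d g = 0) (hd2 : ∑ g, d g ^ 2 ≤ 2) (t : ℕ) :
    ((evo R) ^ t) (corr d) 1 ≤ 4 * Fintype.card G * Real.exp (-(t * gapHat G R / 8)) := by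
  have hsum := sum_pow_evo R (corr d) (sum_corr d hd)
  have hn : (4:ℝ) ≤ (Fintype.card G : ℝ) := by exact_mod_cast hn4
  have hg := gap_nonneg R hid hne
  have hphi : ∀ C : G → ℝ, C 1 ^ 2 / 2 ≤ phi C := by
    intro C
    have : C 1 ^ 2 ≤ ∑ w, C w ^ 2 :=
      Finset.single_le_sum (f := fun g => C g ^ 2) (fun _ _ => sq_nonneg _) (Finset.mem_univ 1)
    unfold phi; linarith
  have h0 : phi (corr d) ≤ 4 * Fintype.card G := by
    have : ∑ w, corr d w ^ 2 ≤ ∑ _w : G, (4:ℝ) := by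
      refine Finset.sum_le_sum fun w _ => (corr_le d w).trans ?_
      have : 0 ≤ ∑ g, d g ^ 2 := by positivity
      nlinarith
    simp only [Finset.sum_const, Finset.card_univ, nsmul_eq_mul] at this
    have := sq_nonneg (corr d 1)
    unfold phi; linarith
  have h1 : ∀ t : ℕ, phi (((evo R) ^ t) (corr d)) ≤ Real.exp (-(gapHat G R / 3)) ^ t * (4 * Fintype.card G) := by
    intro t
    induction t with
    | zero => simpa using h0
    | succ t ih =>
      rw [pow_succ' (evo R), Module.End.mul_apply]
      refine (phi_contract R hsym hid hne hn4 _ (hsum t)).trans ?_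
      have hp : 0 ≤ phi (((evo R) ^ t) (corr d)) := le_trans (by positivity) (hphi _)
      have he : 1 - gapHat G R / 3 ≤ Real.exp (-(gapHat G R / 3)) := by
        linarith [Real.add_one_le_exp (-(gapHat G R / 3))]
      calc _ ≤ Real.exp (-(gapHat G R / 3)) * phi (((evo R) ^ t) (corr d)) :=
            mul_le_mul_of_nonneg_right he hp
        _ ≤ Real.exp (-(gapHat G R / 3)) * (Real.exp (-(gapHat G R / 3)) ^ t * (4 * Fintype.card G)) :=
            mul_le_mul_of_nonneg_left ih (Real.exp_nonneg _)
        _ = _ := by ring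
  have h2 := (hphi _).trans (h1 t)
  refine le_of_abs_le (abs_le_of_sq_le_sq ?_ (by positivity))
  have h3 : Real.exp (-(gapHat G R / 3)) ^ t ≤ Real.exp (-(t * gapHat G R / 8)) ^ 2 := by
    rw [← Real.exp_nat_mul, ← Real.exp_nat_mul, Real.exp_le_exp]
    have : 0 ≤ t * gapHat G R := by positivity
    push_cast
    linarith
  have h4 : Real.exp (-(gapHat G R / 3)) ^ t * (4 * Fintype.card G) ≤
      Real.exp (-(t * gapHat G R / 8)) ^ 2 * (4 * Fintype.card G) :=
    mul_le_mul_of_nonneg_right h3 (by positivity)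
  have h5 : Real.exp (-(t * gapHat G R / 8)) ^ 2 * (4 * Fintype.card G * 2) ≤
      Real.exp (-(t * gapHat G R / 8)) ^ 2 * (4 * Fintype.card G) ^ 2 :=
    mul_le_mul_of_nonneg_left (by nlinarith) (by positivity)
  nlinarith

lemma small_R (R : Finset G) (hsym : ∀ r ∈ R, r⁻¹ ∈ R) (hid : (1 : G) ∉ R) (hne : R.Nonempty)
    (hn4 : Fintype.card G < 4) : R = Finset.univ.erase 1 ∧
      ((Fintype.card G = 2 ∧ R.card = 1) ∨ (Fintype.card G = 3 ∧ R.card = 2)) := by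
  have hsub : R ⊆ Finset.univ.erase 1 := by
    intro r hr
    simp only [Finset.mem_erase, Finset.mem_univ, and_true]
    exact fun h => hid (h ▸ hr)
  have hc : (Finset.univ.erase (1 : G)).card = Fintype.card G - 1 := by
    rw [Finset.card_erase_of_mem (Finset.mem_univ _), Finset.card_univ]
  have hle := Finset.card_le_card hsub
  have hpos := hne.card_pos
  have h31 : ¬ (Fintype.card G = 3 ∧ R.card = 1) := by
    rintro ⟨h3, h1⟩
    obtain ⟨r, rfl⟩ := Finset.card_eq_one.1 h1
    have hr := hsym r (by simp)
    simp only [Finset.mem_singleton] at hr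
    have h2 : r ^ 2 = 1 := by rw [sq]; nth_rewrite 1 [← hr]; simp
    have h3' : r ^ 3 = 1 := by rw [← h3]; exact pow_card_eq_one
    apply hid
    rw [pow_succ, h2, one_mul] at h3'
    simp [h3']
  have : (Fintype.card G = 2 ∧ R.card = 1) ∨ (Fintype.card G = 3 ∧ R.card = 2) := by omega
  refine ⟨Finset.eq_of_subset_of_card_le hsub (by omega), this⟩

lemma main_small (R : Finset G) (hsym : ∀ r ∈ R, r⁻¹ ∈ R) (hid : (1 : G) ∉ R) (hne : R.Nonempty)
    (hn4 : Fintype.card G < 4) (d : G → ℝ) (hd : ∑ g, d g = 0) (hd2 : ∑ g, d g ^ 2 ≤ 2) (t : ℕ) :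
    ((evo R) ^ t) (corr d) 1 ≤ 4 * Fintype.card G * Real.exp (-(t * gapHat G R / 8)) := by
  have hsum := sum_pow_evo R (corr d) (sum_corr d hd)
  obtain ⟨hR, hcard⟩ := small_R R hsym hid hne hn4
  have hn2 : 2 ≤ Fintype.card G := by omega
  have hg := gap_le_two R hid hne hn2
  have step : ∀ C : G → ℝ, ∑ w, C w = 0 → 0 ≤ C 1 → evo R C 1 ≤ 3 / 4 * C 1 := by
    intro C hC h0
    have hs : ∑ r ∈ R, C r = - C 1 := by
      have := Finset.add_sum_erase Finset.univ C (Finset.mem_univ 1)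
      rw [hC] at this
      rw [hR]; linarith
    have e : evo R C 1 = C 1 + ((Fintype.card G : ℝ) * R.card)⁻¹ *
        (4 / 3 * ∑ r ∈ R, C r - 2 / 3 * R.card * C 1) := by
      rw [evo_apply, ← Finset.sum_add_distrib]
      have : ∀ r ∈ R, C (r * 1) + C (1 * r) - 2 * C 1 + 2 * (2 * C 1 - C r) / 3 *
          ((if (1 : G) = 1 then 1 else 0) - (if 1 = r then 1 else 0)) = 4 / 3 * C r - 2 / 3 * C 1 := by
        intro r hr
        have : (1 : G) ≠ r := fun h => hid (h ▸ hr)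
        simp [this]; ring
      rw [Finset.sum_congr rfl this, Finset.sum_sub_distrib, ← Finset.mul_sum]
      simp only [Finset.sum_const, nsmul_eq_mul]
      ring
    rw [e, hs]
    rcases hcard with ⟨h1, h2⟩ | ⟨h1, h2⟩ <;> rw [h1, h2] <;> norm_num <;> linarith
  have h1 : ∀ t : ℕ, ((evo R) ^ t) (corr d) 1 ≤ (3 / 4) ^ t * 2 := by
    intro t
    induction t with
    | zero => simpa [corr_one] using hd2
    | succ t ih =>
      have hp := (all_steps R hsym hid hne t d).2
      rw [pow_succ' (evo R), Module.End.mul_apply]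
      refine (step _ (hsum t) hp).trans ?_
      rw [pow_succ']
      linarith
  have h2 : (3 / 4 : ℝ) ^ t ≤ Real.exp (-(t * gapHat G R / 8)) := by
    calc (3 / 4 : ℝ) ^ t ≤ Real.exp (-(1 / 4)) ^ t := by
          apply pow_le_pow_left₀ (by norm_num)
          linarith [Real.add_one_le_exp (-(1 / 4 : ℝ))]
      _ ≤ _ := by
          rw [← Real.exp_nat_mul, Real.exp_le_exp]
          have : (t : ℝ) * gapHat G R ≤ t * 2 := mul_le_mul_of_nonneg_left hg (by positivity)
          linarith
  have hn : (2:ℝ) ≤ (Fintype.card G : ℝ) := by exact_mod_cast hn2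
  have h3 := h1 t
  have h4 := Real.exp_pos (-(t * gapHat G R / 8))
  nlinarith

lemma sq_le_one_of_simplex (x : G → ℝ) (hx : x ∈ simplexG G) : ∑ g, x g ^ 2 ≤ 1 := by
  rw [← hx.2]
  refine Finset.sum_le_sum fun g _ => ?_
  have h1 : x g ≤ 1 := by
    rw [← hx.2]
    exact Finset.single_le_sum (fun i _ => hx.1 i) (Finset.mem_univ g)
  nlinarith [hx.1 g]

end Helpers

/-- Contraction estimate for the proportionally coupled Gibbs samplers on the simplex
associated with a Cayley graph: `E[‖X_t - Y_t‖₂²] ≤ 4 n e^{-⌊t γ̂ / 8⌋}`. -/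
theorem gibbs_sampler_cayley_contraction
    (R : Finset G) (hsym : ∀ r ∈ R, r⁻¹ ∈ R) (hid : (1 : G) ∉ R) (hne : R.Nonempty)
    (hgen : Subgroup.closure (R : Set G) = ⊤)
    (x y : G → ℝ) (hx : x ∈ simplexG G) (hy : y ∈ simplexG G) (t : ℕ) :
    ∫⁻ ω : Fin t → G × G × ℝ,
        ENNReal.ofReal (∑ g : G,
          ((List.ofFn ω).foldl (gibbsStepG G) x g - (List.ofFn ω).foldl (gibbsStepG G) y g) ^ 2)
        ∂(Measure.pi fun _ => driveG G R) ≤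
      ENNReal.ofReal (4 * (Fintype.card G : ℝ) *
        Real.exp (-((⌊(t : ℝ) * gapHat G R / 8⌋ : ℤ) : ℝ))) := by
  have hs : ∑ g, (x - y) g = 0 := by
    simp only [Pi.sub_apply, Finset.sum_sub_distrib, hx.2, hy.2, sub_self]
  have hs2 : ∑ g, (x - y) g ^ 2 ≤ 2 := by
    have h1 := sq_le_one_of_simplex x hx
    have h2 := sq_le_one_of_simplex y hy
    have : ∑ g, (x - y) g ^ 2 ≤ ∑ g, (x g ^ 2 + y g ^ 2) := by
      refine Finset.sum_le_sum fun g _ => ?_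
      simp only [Pi.sub_apply]
      nlinarith [mul_nonneg (hx.1 g) (hy.1 g)]
    rw [Finset.sum_add_distrib] at this
    linarith
  have key := (all_steps R hsym hid hne t (x - y)).1
  simp only [fold_sub, Pi.sub_apply] at key
  rw [key]
  apply ENNReal.ofReal_le_ofReal
  have hb : ((evo R) ^ t) (corr (x - y)) 1 ≤
      4 * Fintype.card G * Real.exp (-(t * gapHat G R / 8)) := by
    rcases le_or_gt 4 (Fintype.card G) with h | h
    · exact main_large R hsym hid hne h (x - y) hs hs2 t
    · exact main_small R hsym hid hne h (x - y) hs hs2 t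
  refine hb.trans ?_
  apply mul_le_mul_of_nonneg_left _ (by positivity)
  rw [Real.exp_le_exp, neg_le_neg_iff]
  exact Int.floor_le _

end
end

section
/- Assume n ≥ 6 and fix real numbers b, f with 0 ≤ b ≤ f − 1. Let x, y ∈ Δ_n satisfy max_i |x_i − y_i| ≤ n^{−f} and min_i x_i ≥ n^{−b}, min_i y_i ≥ n^{−b}. Fix a subset S ⊂ {1,…,n} and indices i ∈ S, j ∉ S. Then there exists a coupling (λ_x, λ_y) of two uniform random variables on [0,1] (i.e. a probability measure on [0,1]² with both coordinate marginals equal to Lebesgue measure on [0,1]) such that, letting x' be x updated at (i,j) with λ_x (x'_i = λ_x(x_i + x_j), x'_j = (1−λ_x)(x_i + x_j), all other coordinates unchanged) and y' be y updated at (i,j) with λ_y, we have P[∑_{s∈S} x'_s = ∑_{s∈S} y'_s] ≥ 1 − 3·n^{b+1−f}. -/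
open MeasureTheory

noncomputable section

/-- The standard simplex in `ℝ^n`. -/
def simplexS (n : ℕ) : Set (Fin n → ℝ) :=
  {x | (∀ i, 0 ≤ x i) ∧ ∑ i, x i = 1}

/-- The Gibbs-sampler update of `x` at the pair `(i, j)` with parameter `l`:
entry `i` becomes `l (x_i + x_j)` and entry `j` becomes `(1 - l)(x_i + x_j)`. -/
def stepS (n : ℕ) (x : Fin n → ℝ) (i j : Fin n) (l : ℝ) : Fin n → ℝ :=
  Function.update (Function.update x i (l * (x i + x j))) j ((1 - l) * (x i + x j))

/-- A sub-coupling extends to a coupling. -/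
lemma extend_subcoupling (P : Measure ℝ) [IsProbabilityMeasure P] (ν : Measure (ℝ × ℝ))
    (h1 : ν.map Prod.fst ≤ P) (h2 : ν.map Prod.snd ≤ P) :
    ∃ μ : Measure (ℝ × ℝ), IsProbabilityMeasure μ ∧ μ.map Prod.fst = P ∧ μ.map Prod.snd = P ∧
      ν ≤ μ := by
  have e1 : ν.map Prod.fst Set.univ = ν Set.univ := by
    rw [Measure.map_apply measurable_fst MeasurableSet.univ, Set.preimage_univ]
  have e2 : ν.map Prod.snd Set.univ = ν Set.univ := by
    rw [Measure.map_apply measurable_snd MeasurableSet.univ, Set.preimage_univ]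
  have hm : ν Set.univ ≤ 1 := by
    rw [← e1, ← measure_univ (μ := P)]; exact h1 _
  have hmt : ν Set.univ ≠ ⊤ := ne_top_of_le_ne_top ENNReal.one_ne_top hm
  haveI : IsFiniteMeasure ν := ⟨lt_top_iff_ne_top.2 hmt⟩
  haveI : IsFiniteMeasure (ν.map Prod.fst) := ⟨by rw [e1]; exact lt_top_iff_ne_top.2 hmt⟩
  haveI : IsFiniteMeasure (ν.map Prod.snd) := ⟨by rw [e2]; exact lt_top_iff_ne_top.2 hmt⟩
  set c : ENNReal := 1 - ν Set.univ with hc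
  have hct : c ≠ ⊤ := ne_top_of_le_ne_top ENNReal.one_ne_top tsub_le_self
  set P1 := P - ν.map Prod.fst with hP1
  set P2 := P - ν.map Prod.snd with hP2
  have m1 : P1 Set.univ = c := by
    rw [hP1, Measure.sub_apply MeasurableSet.univ h1, e1, measure_univ]
  have m2 : P2 Set.univ = c := by
    rw [hP2, Measure.sub_apply MeasurableSet.univ h2, e2, measure_univ]
  have a1 : P1 + ν.map Prod.fst = P := Measure.sub_add_cancel_of_le h1
  have a2 : P2 + ν.map Prod.snd = P := Measure.sub_add_cancel_of_le h2
  have key1 : (ν + c⁻¹ • P1.prod P2).map Prod.fst = P := by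
    rw [Measure.map_add _ _ measurable_fst, Measure.map_smul, Measure.map_fst_prod, m2, smul_smul]
    by_cases h0 : c = 0
    · have z : P1 = 0 := by rw [← Measure.measure_univ_eq_zero, m1, h0]
      rw [z, zero_add] at a1
      rw [z, smul_zero, add_zero, a1]
    · rw [ENNReal.inv_mul_cancel h0 hct, one_smul, add_comm, a1]
  have key2 : (ν + c⁻¹ • P1.prod P2).map Prod.snd = P := by
    rw [Measure.map_add _ _ measurable_snd, Measure.map_smul, Measure.map_snd_prod, m1, smul_smul]
    by_cases h0 : c = 0
    · have z : P2 = 0 := by rw [← Measure.measure_univ_eq_zero, m2, h0]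
      rw [z, zero_add] at a2
      rw [z, smul_zero, add_zero, a2]
    · rw [ENNReal.inv_mul_cancel h0 hct, one_smul, add_comm, a2]
  refine ⟨ν + c⁻¹ • P1.prod P2, ⟨?_⟩, key1, key2, Measure.le_add_right le_rfl⟩
  have := congrArg (fun m => m Set.univ) key1
  simpa [Measure.map_apply measurable_fst MeasurableSet.univ] using this

/-- Rescaled Lebesgue measure on a subinterval is dominated by the uniform law. -/
lemma map_le_unif (A X M : ℝ) (hX : 0 < X) (hM : X ≤ M) (K : Set ℝ)
    (hK : K ⊆ Set.Icc A (A + X)) :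
    (ENNReal.ofReal M⁻¹ • (volume : Measure ℝ).restrict K).map (fun z => X⁻¹ * (z - A)) ≤
      (volume : Measure ℝ).restrict (Set.Icc 0 1) := by
  have hg : Measurable (fun z : ℝ => X⁻¹ * (z - A)) := by fun_prop
  have hM0 : 0 < M := hX.trans_le hM
  refine Measure.le_iff.2 fun E hE => ?_
  rw [Measure.map_apply hg hE, Measure.smul_apply, Measure.restrict_apply (hg hE),
    Measure.restrict_apply hE, smul_eq_mul]
  have sub : (fun z : ℝ => X⁻¹ * (z - A)) ⁻¹' E ∩ K ⊆
      (fun z : ℝ => z + (-A)) ⁻¹' ((fun z : ℝ => X⁻¹ * z) ⁻¹' (E ∩ Set.Icc 0 1)) := by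
    rintro z ⟨hz, hzK⟩
    obtain ⟨h1, h2⟩ := hK hzK
    refine ⟨hz, ?_, ?_⟩
    · exact mul_nonneg (inv_nonneg.2 hX.le) (by linarith)
    · show X⁻¹ * (z + -A) ≤ 1
      rw [inv_mul_le_iff₀ hX]; linarith
  refine (mul_le_mul_right (measure_mono sub) _).trans ?_
  rw [measure_preimage_add_right, Real.volume_preimage_mul_left (inv_ne_zero hX.ne'), inv_inv,
    abs_of_pos hX, ← mul_assoc, ← ENNReal.ofReal_mul (inv_nonneg.2 hM0.le)]
  refine mul_le_of_le_one_left' ?_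
  rw [ENNReal.ofReal_le_one, inv_mul_le_iff₀ hM0]; linarith

lemma sum_stepS (n : ℕ) (x : Fin n → ℝ) (S : Finset (Fin n)) (i : Fin n) (hiS : i ∈ S)
    (j : Fin n) (hjS : j ∉ S) (l : ℝ) :
    ∑ s ∈ S, stepS n x i j l s = ∑ s ∈ S.erase i, x s + l * (x i + x j) := by
  have hij : i ≠ j := fun h => hjS (h ▸ hiS)
  rw [← Finset.sum_erase_add _ _ hiS]
  congr 1
  · refine Finset.sum_congr rfl fun s hs => ?_
    have h1 := Finset.ne_of_mem_erase hs
    have h2 : s ≠ j := fun h => hjS (h ▸ Finset.mem_of_mem_erase hs)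
    simp [stepS, h1, h2]
  · simp [stepS, hij]

lemma sum_diff_le {n : ℕ} (x y : Fin n → ℝ) (d : ℝ) (hxy : ∀ i, |x i - y i| ≤ d)
    (T : Finset (Fin n)) : |∑ s ∈ T, x s - ∑ s ∈ T, y s| ≤ n * d := by
  rw [← Finset.sum_sub_distrib]
  refine (Finset.abs_sum_le_sum_abs _ _).trans ?_
  refine (Finset.sum_le_sum fun s _ => hxy s).trans ?_
  rw [Finset.sum_const, nsmul_eq_mul]
  by_cases h : T.Nonempty
  · obtain ⟨s, _⟩ := h
    have hd : 0 ≤ d := (abs_nonneg _).trans (hxy s)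
    refine mul_le_mul_of_nonneg_right ?_ hd
    exact_mod_cast (Finset.card_le_univ T).trans_eq (Fintype.card_fin n)
  · rw [Finset.not_nonempty_iff_eq_empty] at h
    subst h
    rcases Nat.eq_zero_or_pos n with h0 | h0
    · simp [h0]
    · have hd : 0 ≤ d := (abs_nonneg _).trans (hxy ⟨0, h0⟩)
      simp; positivity

/-- Subset-coupling lemma on the simplex: for nearby points bounded away from the boundary,
there is a coupling of the uniform update variables making the weights of `S` agree with
probability at least `1 - 3 n^{b+1-f}`. -/
theorem simplex_subset_coupling
    (n : ℕ) (hn : 6 ≤ n) (b f : ℝ) (hb : 0 ≤ b) (hbf : b ≤ f - 1)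
    (x y : Fin n → ℝ) (hx : x ∈ simplexS n) (hy : y ∈ simplexS n)
    (hxy : ∀ i, |x i - y i| ≤ (n : ℝ) ^ (-f))
    (hxlow : ∀ i, (n : ℝ) ^ (-b) ≤ x i) (hylow : ∀ i, (n : ℝ) ^ (-b) ≤ y i)
    (S : Finset (Fin n)) (i : Fin n) (hiS : i ∈ S) (j : Fin n) (hjS : j ∉ S) :
    ∃ μ : Measure (ℝ × ℝ),
      IsProbabilityMeasure μ ∧
      μ.map Prod.fst = (volume : Measure ℝ).restrict (Set.Icc 0 1) ∧
      μ.map Prod.snd = (volume : Measure ℝ).restrict (Set.Icc 0 1) ∧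
      ENNReal.ofReal (1 - 3 * (n : ℝ) ^ (b + 1 - f)) ≤
        μ {l | ∑ s ∈ S, stepS n x i j l.1 s = ∑ s ∈ S, stepS n y i j l.2 s} := by
  have hn0 : (0 : ℝ) < n := by exact_mod_cast (by omega : 0 < n)
  set A := ∑ s ∈ S.erase i, x s with hA
  set B := ∑ s ∈ S.erase i, y s with hB
  set X := x i + x j with hX
  set Y := y i + y j with hY
  set r : ℝ := (n : ℝ) ^ (b + 1 - f) with hr
  set e : ℝ := (n : ℝ) ^ (-b) with he
  have he0 : 0 < e := Real.rpow_pos_of_pos hn0 _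
  have hr0 : 0 < r := Real.rpow_pos_of_pos hn0 _
  have hnd : (n : ℝ) * (n : ℝ) ^ (-f) = r * e := by
    rw [hr, he, ← Real.rpow_add hn0]
    have h1 : (n : ℝ) * (n : ℝ) ^ (-f) = (n : ℝ) ^ (1 + -f) := by
      rw [Real.rpow_add hn0, Real.rpow_one]
    rw [h1]
    congr 1; ring
  have hXe : 2 * e ≤ X := by have := hxlow i; have := hxlow j; linarith
  have hYe : 2 * e ≤ Y := by have := hylow i; have := hylow j; linarith
  have hX0 : 0 < X := by linarith
  have hY0 : 0 < Y := by linarith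
  have d1 : |A - B| ≤ r * e := by
    rw [← hnd]; exact sum_diff_le x y _ hxy _
  have d3 : |(A + X) - (B + Y)| ≤ r * e := by
    have hh : ∀ z : Fin n → ℝ, ∑ i, z i = 1 →
        ∑ s ∈ S.erase i, z s + (z i + z j) = 1 - ∑ s ∈ Sᶜ.erase j, z s := by
      intro z hz
      have h1 := Finset.sum_erase_add S z hiS
      have h2 := Finset.sum_erase_add Sᶜ z (Finset.mem_compl.2 hjS)
      have h3 := Finset.sum_add_sum_compl S z
      linarith
    have h1 := hh x hx.2
    have h2 := hh y hy.2
    have h3 := sum_diff_le x y _ hxy (Sᶜ.erase j)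
    rw [hnd, abs_sub_comm] at h3
    rw [hA, hX, hB, hY, h1, h2]
    convert h3 using 2
    ring
  set M := max X Y with hM
  have hM0 : 0 < M := hX0.trans_le (le_max_left _ _)
  set K := Set.Icc (max A B) (min (A + X) (B + Y)) with hK
  set κ := ENNReal.ofReal M⁻¹ • (volume : Measure ℝ).restrict K with hκ
  have hG : Measurable (fun z : ℝ => (X⁻¹ * (z - A), Y⁻¹ * (z - B))) := by fun_prop
  haveI : IsProbabilityMeasure ((volume : Measure ℝ).restrict (Set.Icc 0 1)) := ⟨by simp⟩
  obtain ⟨μ, p, q1, q2, hle⟩ := extend_subcoupling ((volume : Measure ℝ).restrict (Set.Icc 0 1))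
    (κ.map (fun z : ℝ => (X⁻¹ * (z - A), Y⁻¹ * (z - B))))
    (by
      rw [Measure.map_map measurable_fst hG]
      exact map_le_unif A X M hX0 (le_max_left _ _) K
        (Set.Icc_subset_Icc (le_max_left _ _) (min_le_left _ _)))
    (by
      rw [Measure.map_map measurable_snd hG]
      exact map_le_unif B Y M hY0 (le_max_right _ _) K
        (Set.Icc_subset_Icc (le_max_right _ _) (min_le_right _ _)))
  refine ⟨μ, p, q1, q2, le_trans ?_ (hle _)⟩
  have hset : {l : ℝ × ℝ | ∑ s ∈ S, stepS n x i j l.1 s = ∑ s ∈ S, stepS n y i j l.2 s} =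
      {l : ℝ × ℝ | A + l.1 * X = B + l.2 * Y} := by
    ext l
    simp only [Set.mem_setOf_eq, sum_stepS n _ S i hiS j hjS, ← hA, ← hB, ← hX, ← hY]
  have hmeas : MeasurableSet {l : ℝ × ℝ | A + l.1 * X = B + l.2 * Y} :=
    measurableSet_eq_fun (by fun_prop) (by fun_prop)
  rw [hset, Measure.map_apply hG hmeas]
  have huniv : (fun z : ℝ => (X⁻¹ * (z - A), Y⁻¹ * (z - B))) ⁻¹'
      {l : ℝ × ℝ | A + l.1 * X = B + l.2 * Y} = Set.univ := by
    ext z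
    simp only [Set.mem_preimage, Set.mem_setOf_eq, Set.mem_univ, iff_true]
    field_simp
    ring
  rw [huniv, hκ, Measure.smul_apply, Measure.restrict_apply_univ, hK, Real.volume_Icc, smul_eq_mul,
    ← ENNReal.ofReal_mul (inv_nonneg.2 hM0.le)]
  refine ENNReal.ofReal_le_ofReal ?_
  rw [le_inv_mul_iff₀ hM0]
  have hMe : r * (2 * e) ≤ r * M :=
    mul_le_mul_of_nonneg_left (hXe.trans (le_max_left _ _)) hr0.le
  have hre : 0 < r * e := mul_pos hr0 he0
  rw [abs_le] at d1 d3
  have main : M - 3 * (r * e) ≤ min (A + X) (B + Y) - max A B := by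
    rcases max_cases X Y with ⟨h, _⟩ | ⟨h, _⟩ <;>
    rcases max_cases A B with ⟨h', _⟩ | ⟨h', _⟩ <;>
    rcases min_cases (A + X) (B + Y) with ⟨h'', _⟩ | ⟨h'', _⟩ <;>
    rw [hM, h, h', h''] <;> linarith
  nlinarith

end
end

section
/- Let (X_t, Y_t) be two copies of the Gibbs sampler on M_n, started from arbitrary points X_0, Y_0 ∈ M_n and coupled under the proportional coupling. Then for every integer T ≥ 0, E[‖X_T − Y_T‖_2²] ≤ (1 − 2/(3n))^T · ‖X_0 − Y_0‖_2², where ‖X − Y‖_2² = ∑_{i=1}^n ∑_{j=1}^2 (X[i,j] − Y[i,j])². -/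
open MeasureTheory

noncomputable section

/-- The set `M_n` of nonnegative `n × 2` matrices with row sums `2` and column sums `n`. -/
def MSet (n : ℕ) : Set (Fin n × Fin 2 → ℝ) :=
  {x | (∀ p, 0 ≤ x p) ∧ (∀ i : Fin n, x (i, 0) + x (i, 1) = 2) ∧
    (∀ j : Fin 2, ∑ i : Fin n, x (i, j) = n)}

/-- The uniform (normalized `(n-1)`-dimensional Hausdorff) measure on `M_n`. -/
def UM (n : ℕ) : Measure (Fin n × Fin 2 → ℝ) :=
  (μH[(n : ℝ) - 1] (MSet n))⁻¹ • (μH[(n : ℝ) - 1]).restrict (MSet n)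

/-- One step of the Gibbs sampler on `M_n`, updating the pair of rows `u.1 = (i, j)`
using the uniform variable `u.2 = λ`. -/
def stepM (n : ℕ) (x : Fin n × Fin 2 → ℝ) (u : (Fin n × Fin n) × ℝ) :
    Fin n × Fin 2 → ℝ := fun p =>
  let i := u.1.1
  let j := u.1.2
  let l := u.2
  let d := 2 - x (i, 0) - x (j, 0)
  if p = (i, 0) then (if 0 ≤ d then l * (2 - d) else 2 * l - (1 - l) * d)
  else if p = (j, 0) then (if 0 ≤ d then (1 - l) * (2 - d) else 2 * (1 - l) - l * d)
  else if p = (i, 1) then (if 0 ≤ d then 2 * (1 - l) + l * d else (1 - l) * (2 + d))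
  else if p = (j, 1) then (if 0 ≤ d then 2 * l + (1 - l) * d else l * (2 + d))
  else x p

/-- The set of ordered pairs `(i, j)` with `i < j`. -/
def pairsF (n : ℕ) : Finset (Fin n × Fin n) := Finset.univ.filter fun p => p.1 < p.2

/-- Law of the random update datum: `(i, j)` uniform among pairs `i < j`, and
`λ` uniform on `[0,1]`. -/
def driveM (n : ℕ) : Measure ((Fin n × Fin n) × ℝ) :=
  (unifOn (pairsF n)).prod ((volume : Measure ℝ).restrict (Set.Icc 0 1))

/-- Law of the Gibbs sampler on `M_n` after `T` steps started at `x`. -/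
def lawM (n : ℕ) (x : Fin n × Fin 2 → ℝ) (T : ℕ) : Measure (Fin n × Fin 2 → ℝ) :=
  Measure.map (fun ω : Fin T → (Fin n × Fin n) × ℝ => (List.ofFn ω).foldl (stepM n) x)
    (Measure.pi fun _ => driveM n)

/-- Law of the `(T+1)`-step path of the Gibbs sampler on `M_n` with initial distribution `μ`. -/
def pathM (n T : ℕ) (μ : Measure (Fin n × Fin 2 → ℝ)) :
    Measure (Fin (T + 1) → Fin n × Fin 2 → ℝ) :=
  Measure.map (fun p : (Fin n × Fin 2 → ℝ) × (Fin T → (Fin n × Fin n) × ℝ) =>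
      fun s : Fin (T + 1) => ((List.ofFn p.2).take s).foldl (stepM n) p.1)
    (μ.prod (Measure.pi fun _ => driveM n))


/-- Replacing two entries in a sum. -/
theorem sum_two_change {n : ℕ} (f g : Fin n → ℝ) (i j : Fin n) (hij : i ≠ j)
    (h : ∀ k, k ≠ i → k ≠ j → f k = g k) :
    ∑ k, f k = ∑ k, g k - g i - g j + f i + f j := by
  have h1 : ∑ k, (f k - g k) = (f i - g i) + (f j - g j) := by
    apply Fintype.sum_eq_add i j hij
    rintro k ⟨h1, h2⟩
    rw [h k h1 h2, sub_self]
  rw [Finset.sum_sub_distrib] at h1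
  linarith

/-- Invariant of the coupled pair. -/
def InvM (n : ℕ) (x y : Fin n × Fin 2 → ℝ) : Prop :=
  (∀ i, x (i, 0) + x (i, 1) = 2) ∧ (∀ i, y (i, 0) + y (i, 1) = 2) ∧
    ∑ i, x (i, 0) = ∑ i, y (i, 0)

theorem stepM_i0 (n : ℕ) (x : Fin n × Fin 2 → ℝ) (i j : Fin n) (l : ℝ) :
    stepM n x ((i, j), l) (i, 0) = if 0 ≤ 2 - x (i, 0) - x (j, 0) then
      l * (2 - (2 - x (i, 0) - x (j, 0))) else
      2 * l - (1 - l) * (2 - x (i, 0) - x (j, 0)) := by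
  simp [stepM]

theorem stepM_j0 (n : ℕ) (x : Fin n × Fin 2 → ℝ) (i j : Fin n) (hij : i ≠ j) (l : ℝ) :
    stepM n x ((i, j), l) (j, 0) = if 0 ≤ 2 - x (i, 0) - x (j, 0) then
      (1 - l) * (2 - (2 - x (i, 0) - x (j, 0))) else
      2 * (1 - l) - l * (2 - x (i, 0) - x (j, 0)) := by
  simp [stepM, hij.symm]

theorem stepM_k0 (n : ℕ) (x : Fin n × Fin 2 → ℝ) (i j k : Fin n) (hi : k ≠ i) (hj : k ≠ j)
    (l : ℝ) : stepM n x ((i, j), l) (k, 0) = x (k, 0) := by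
  simp [stepM, hi, hj]

theorem stepM_row (n : ℕ) (x : Fin n × Fin 2 → ℝ) (hx : ∀ i, x (i, 0) + x (i, 1) = 2)
    (i j : Fin n) (hij : i ≠ j) (l : ℝ) (k : Fin n) :
    stepM n x ((i, j), l) (k, 0) + stepM n x ((i, j), l) (k, 1) = 2 := by
  by_cases hi : k = i
  · subst hi
    simp only [stepM, Prod.mk.injEq, hij]
    simp
    split_ifs <;> ring
  · by_cases hj : k = j
    · subst hj
      simp only [stepM, Prod.mk.injEq, hi]
      simp
      split_ifs <;> ring
    · simp [stepM, hi, hj, hx]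

theorem stepM_col (n : ℕ) (x : Fin n × Fin 2 → ℝ)
    (i j : Fin n) (hij : i ≠ j) (l : ℝ) :
    ∑ k, stepM n x ((i, j), l) (k, 0) = ∑ k, x (k, 0) := by
  rw [sum_two_change (fun k => stepM n x ((i, j), l) (k, 0)) (fun k => x (k, 0)) i j hij
    (fun k h1 h2 => stepM_k0 n x i j k h1 h2 l), stepM_i0, stepM_j0 n x i j hij]
  split_ifs <;> ring

theorem InvM.step {n : ℕ} {x y : Fin n × Fin 2 → ℝ} (h : InvM n x y)
    (i j : Fin n) (hij : i ≠ j) (l : ℝ) :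
    InvM n (stepM n x ((i, j), l)) (stepM n y ((i, j), l)) :=
  ⟨stepM_row n x h.1 i j hij l, stepM_row n y h.2.1 i j hij l, by
    rw [stepM_col n x i j hij, stepM_col n y i j hij, h.2.2]⟩

theorem InvM.norm {n : ℕ} {x y : Fin n × Fin 2 → ℝ} (h : InvM n x y) :
    ∑ q, (x q - y q) ^ 2 = 2 * ∑ i, (x (i, 0) - y (i, 0)) ^ 2 := by
  rw [Fintype.sum_prod_type, Finset.mul_sum]
  refine Finset.sum_congr rfl fun i _ => ?_
  rw [Fin.sum_univ_two]
  have h1 : x (i, 1) - y (i, 1) = -(x (i, 0) - y (i, 0)) := by linarith [h.1 i, h.2.1 i]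
  rw [h1]; ring

/-- Pointwise bound for a single step. -/
theorem InvM.step_norm {n : ℕ} {x y : Fin n × Fin 2 → ℝ} (h : InvM n x y)
    (i j : Fin n) (hij : i ≠ j) (l : ℝ) :
    ∑ q, (stepM n x ((i, j), l) q - stepM n y ((i, j), l) q) ^ 2 ≤
      2 * (∑ k, (x (k, 0) - y (k, 0)) ^ 2 - (x (i, 0) - y (i, 0)) ^ 2 - (x (j, 0) - y (j, 0)) ^ 2
        + (l ^ 2 + (1 - l) ^ 2) * ((x (i, 0) - y (i, 0)) + (x (j, 0) - y (j, 0))) ^ 2) := by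
  rw [(h.step i j hij l).norm]
  rw [sum_two_change (fun k => (stepM n x ((i, j), l) (k, 0) - stepM n y ((i, j), l) (k, 0)) ^ 2)
    (fun k => (x (k, 0) - y (k, 0)) ^ 2) i j hij
    (fun k h1 h2 => by simp only [stepM_k0 n _ i j k h1 h2 l]), stepM_i0, stepM_i0,
    stepM_j0 n x i j hij, stepM_j0 n y i j hij]
  generalize ∑ k, (x (k, 0) - y (k, 0)) ^ 2 = S
  generalize x (i, 0) = a
  generalize x (j, 0) = b
  generalize y (i, 0) = c
  generalize y (j, 0) = d
  split_ifs with h1 h2 h2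
  · nlinarith
  · nlinarith [mul_nonneg (mul_nonneg h1 (neg_nonneg.2 (not_le.1 h2).le)) (sq_nonneg (1 - 2 * l))]
  · nlinarith [mul_nonneg (mul_nonneg h2 (neg_nonneg.2 (not_le.1 h1).le)) (sq_nonneg (1 - 2 * l))]
  · nlinarith

theorem sum_pairsF (n : ℕ) (f : Fin n → Fin n → ℝ) (hf : ∀ i j, f i j = f j i) :
    2 * ∑ p ∈ pairsF n, f p.1 p.2 = ∑ i, ∑ j, f i j - ∑ i, f i i := by
  have e1 : ∑ p ∈ pairsF n, f p.1 p.2 = ∑ i, ∑ j, if i < j then f i j else 0 := by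
    rw [pairsF, Finset.sum_filter, Fintype.sum_prod_type]
  have e2 : ∑ p ∈ pairsF n, f p.1 p.2 = ∑ i, ∑ j, if j < i then f i j else 0 := by
    rw [e1, Finset.sum_comm]
    refine Finset.sum_congr rfl fun i _ => Finset.sum_congr rfl fun j _ => ?_
    rw [hf]
  have e3 : ∑ i, f i i = ∑ i, ∑ j, if i = j then f i j else 0 := by simp
  rw [two_mul]
  nth_rewrite 1 [e1]
  rw [e2, e3, eq_sub_iff_add_eq, ← Finset.sum_add_distrib, ← Finset.sum_add_distrib]
  refine Finset.sum_congr rfl fun i _ => ?_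
  rw [← Finset.sum_add_distrib, ← Finset.sum_add_distrib]
  refine Finset.sum_congr rfl fun j _ => ?_
  rcases lt_trichotomy i j with h | h | h
  · simp [h, h.not_gt, h.ne]
  · simp [h]
  · simp [h, h.not_gt, h.ne']

theorem card_pairsF (n : ℕ) : 2 * ((pairsF n).card : ℝ) = n * (n - 1) := by
  have := sum_pairsF n (fun _ _ => 1) (fun _ _ => rfl)
  simp at this
  rw [this]; ring

theorem avg_bound (n : ℕ) (hn : 2 ≤ n) (d : Fin n → ℝ) (hd : ∑ i, d i = 0) :
    ((pairsF n).card : ℝ)⁻¹ * ∑ p ∈ pairsF n, 2 * (∑ k, d k ^ 2 - d p.1 ^ 2 - d p.2 ^ 2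
      + 2 / 3 * (d p.1 + d p.2) ^ 2) ≤ (1 - 2 / (3 * n)) * (2 * ∑ k, d k ^ 2) := by
  have hn' : (2 : ℝ) ≤ n := by exact_mod_cast hn
  have hc := card_pairsF n
  have hc0 : (0 : ℝ) < (pairsF n).card := by nlinarith
  have hs := sum_pairsF n (fun i j => 2 * (∑ k, d k ^ 2 - d i ^ 2 - d j ^ 2
      + 2 / 3 * (d i + d j) ^ 2)) (fun i j => by ring)
  set S := ∑ k, d k ^ 2 with hS
  have hS0 : 0 ≤ S := Finset.sum_nonneg fun _ _ => sq_nonneg _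
  have r1 : ∑ i, ∑ j, 2 * (S - d i ^ 2 - d j ^ 2 + 2 / 3 * (d i + d j) ^ 2)
      = 2 * n ^ 2 * S - 4 / 3 * n * S := by
    have : ∀ i, ∑ j, 2 * (S - d i ^ 2 - d j ^ 2 + 2 / 3 * (d i + d j) ^ 2)
        = n * (2 * S) - n * (2 / 3) * d i ^ 2 - 2 / 3 * S := by
      intro i
      have : ∀ j, 2 * (S - d i ^ 2 - d j ^ 2 + 2 / 3 * (d i + d j) ^ 2)
        = (2 * S - 2 / 3 * d i ^ 2) - 2 / 3 * d j ^ 2 + 8 / 3 * d i * d j := fun j => by ring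
      simp only [this, Finset.sum_add_distrib, Finset.sum_sub_distrib, ← Finset.mul_sum, hd, ← hS]
      simp
      ring
    simp only [this, Finset.sum_sub_distrib, ← Finset.mul_sum, ← hS]
    simp
    ring
  have r2 : ∑ i, 2 * (S - d i ^ 2 - d i ^ 2 + 2 / 3 * (d i + d i) ^ 2)
      = 2 * n * S + 4 / 3 * S := by
    have : ∀ i, 2 * (S - d i ^ 2 - d i ^ 2 + 2 / 3 * (d i + d i) ^ 2)
        = 2 * S + 4 / 3 * d i ^ 2 := fun j => by ring
    simp only [this, Finset.sum_add_distrib, ← Finset.mul_sum, ← hS]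
    simp
    ring
  rw [r1, r2] at hs
  rw [inv_mul_le_iff₀ hc0]
  have e : (1 - 2 / (3 * (n : ℝ))) * (2 * S) * n = (n - 2 / 3) * (2 * S) := by
    field_simp
  have : ((pairsF n).card : ℝ) = n * (n - 1) / 2 := by linarith
  rw [this]
  have e2 : (n : ℝ) * (n - 1) / 2 * ((1 - 2 / (3 * n)) * (2 * S))
      = (n - 1) / 2 * ((n - 2 / 3) * (2 * S)) := by rw [← e]; ring
  rw [e2]
  nlinarith

theorem lint_poly (A B C : ℝ) (hC : 0 ≤ C) (hA : 0 ≤ A) (hB : 0 ≤ B) :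
    ∫⁻ l in Set.Icc (0 : ℝ) 1, ENNReal.ofReal (C * (2 * (A + (l ^ 2 + (1 - l) ^ 2) * B)))
      = ENNReal.ofReal (C * (2 * (A + 2 / 3 * B))) := by
  rw [← ofReal_integral_eq_lintegral_ofReal]
  · rw [integral_Icc_eq_integral_Ioc, ← intervalIntegral.integral_of_le zero_le_one]
    congr 1
    have : ∀ l : ℝ, C * (2 * (A + (l ^ 2 + (1 - l) ^ 2) * B))
      = (C * 2 * (A + B)) + ((C * 4 * B) * l ^ 2 - (C * 4 * B) * l) := fun l => by ring
    simp only [this]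
    rw [intervalIntegral.integral_add, intervalIntegral.integral_sub]
    · rw [intervalIntegral.integral_const_mul, intervalIntegral.integral_const_mul,
        intervalIntegral.integral_const_mul, integral_pow,
        integral_id, intervalIntegral.integral_const]
      simp
      ring
    all_goals exact Continuous.intervalIntegrable (by fun_prop) _ _
  · exact (Continuous.continuousOn (by fun_prop)).integrableOn_Icc
  · exact Filter.Eventually.of_forall fun l => by positivity

instance unifOn_finite (n : ℕ) : IsFiniteMeasure (unifOn (pairsF n)) := by
  constructor
  rw [unifOn]
  simp only [Measure.smul_apply, Measure.coe_finsetSum, Finset.sum_apply, smul_eq_mul]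
  by_cases h : (pairsF n).card = 0
  · rw [Finset.card_eq_zero] at h
    simp [h]
  · refine ENNReal.mul_lt_top (by simpa [Finset.card_eq_zero, Finset.nonempty_iff_ne_empty, pos_iff_ne_zero] using h) ?_
    simp

instance driveM_finite (n : ℕ) : IsFiniteMeasure (driveM n) := by
  unfold driveM; infer_instance

theorem lintegral_driveM_le (n : ℕ) (F : (Fin n × Fin n) × ℝ → ENNReal) :
    ∫⁻ u, F u ∂(driveM n) ≤ ((pairsF n).card : ENNReal)⁻¹ *
      ∑ p ∈ pairsF n, ∫⁻ l in Set.Icc (0 : ℝ) 1, F (p, l) := by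
  refine (lintegral_prod_le _).trans ?_
  rw [unifOn, lintegral_smul_measure, lintegral_finsetSum_measure]
  simp

theorem lintegral_succ_le (n T : ℕ) (G : List ((Fin n × Fin n) × ℝ) → ENNReal) :
    ∫⁻ ω : Fin (T + 1) → (Fin n × Fin n) × ℝ, G (List.ofFn ω) ∂(Measure.pi fun _ => driveM n) ≤
    ∫⁻ u, ∫⁻ ω : Fin T → (Fin n × Fin n) × ℝ, G (u :: List.ofFn ω)
      ∂(Measure.pi fun _ => driveM n) ∂(driveM n) := by
  have mp := measurePreserving_piFinSuccAbove (fun _ : Fin (T + 1) => driveM n) 0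
  have := mp.lintegral_comp_emb (MeasurableEquiv.measurableEmbedding _)
    (fun z => G (z.1 :: List.ofFn z.2))
  have e : ∀ ω : Fin (T + 1) → (Fin n × Fin n) × ℝ,
      G (((MeasurableEquiv.piFinSuccAbove (fun _ => (Fin n × Fin n) × ℝ) 0) ω).1 ::
        List.ofFn ((MeasurableEquiv.piFinSuccAbove (fun _ => (Fin n × Fin n) × ℝ) 0) ω).2)
      = G (List.ofFn ω) := by
    intro ω
    rw [List.ofFn_succ]
    rfl
  simp only [e] at this
  rw [this]
  exact lintegral_prod_le _

theorem contraction_inv (n : ℕ) (hn : 2 ≤ n) (T : ℕ) : ∀ (x y : Fin n × Fin 2 → ℝ),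
    InvM n x y →
    ∫⁻ ω : Fin T → (Fin n × Fin n) × ℝ,
        ENNReal.ofReal (∑ q : Fin n × Fin 2,
          ((List.ofFn ω).foldl (stepM n) x q - (List.ofFn ω).foldl (stepM n) y q) ^ 2)
        ∂(Measure.pi fun _ => driveM n) ≤
      ENNReal.ofReal ((1 - 2 / (3 * n)) ^ T * ∑ q : Fin n × Fin 2, (x q - y q) ^ 2) := by
  have hn' : (2 : ℝ) ≤ n := by exact_mod_cast hn
  have hc : (0 : ℝ) ≤ 1 - 2 / (3 * n) := by
    rw [sub_nonneg, div_le_one (by positivity)]; linarith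
  have hcard : (0 : ℝ) < (pairsF n).card := by
    have := card_pairsF n
    nlinarith
  induction T with
  | zero =>
    intro x y _
    simp
  | succ T ih =>
    intro x y h
    refine (lintegral_succ_le n T (fun L => ENNReal.ofReal (∑ q : Fin n × Fin 2,
          (L.foldl (stepM n) x q - L.foldl (stepM n) y q) ^ 2))).trans ?_
    refine (lintegral_driveM_le n _).trans ?_
    simp only [List.foldl_cons]
    set d : Fin n → ℝ := fun k => x (k, 0) - y (k, 0) with hd
    have hd0 : ∑ k, d k = 0 := by
      simp only [hd, Finset.sum_sub_distrib, h.2.2, sub_self]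
    set C : ℝ := (1 - 2 / (3 * n)) ^ T with hC
    have hC0 : 0 ≤ C := pow_nonneg hc T
    have hA : ∀ p ∈ pairsF n, 0 ≤ ∑ k, d k ^ 2 - d p.1 ^ 2 - d p.2 ^ 2 := by
      intro p hp
      have hp' : p.1 < p.2 := by simpa [pairsF] using hp
      have := Finset.add_le_sum (s := Finset.univ) (f := fun k => d k ^ 2)
        (fun _ _ => sq_nonneg _) (Finset.mem_univ p.1) (Finset.mem_univ p.2) hp'.ne
      linarith
    have key : ∀ p ∈ pairsF n, (∫⁻ l in Set.Icc (0 : ℝ) 1,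
        ∫⁻ ω : Fin T → (Fin n × Fin n) × ℝ, ENNReal.ofReal (∑ q : Fin n × Fin 2,
          ((List.ofFn ω).foldl (stepM n) (stepM n x (p, l)) q -
            (List.ofFn ω).foldl (stepM n) (stepM n y (p, l)) q) ^ 2)
          ∂(Measure.pi fun _ => driveM n)) ≤
        ENNReal.ofReal (C * (2 * (∑ k, d k ^ 2 - d p.1 ^ 2 - d p.2 ^ 2
          + 2 / 3 * (d p.1 + d p.2) ^ 2))) := by
      intro p hp
      have hp' : p.1 < p.2 := by simpa [pairsF] using hp
      rw [← lint_poly _ _ C hC0 (hA p hp) (sq_nonneg _)]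
      refine lintegral_mono fun l => ?_
      refine (ih _ _ (h.step p.1 p.2 hp'.ne l)).trans ?_
      exact ENNReal.ofReal_le_ofReal
        (mul_le_mul_of_nonneg_left (h.step_norm p.1 p.2 hp'.ne l) hC0)
    refine (mul_le_mul_right (Finset.sum_le_sum key) _).trans ?_
    rw [← ENNReal.ofReal_sum_of_nonneg, ← ENNReal.ofReal_natCast, ← ENNReal.ofReal_inv_of_pos hcard,
      ← ENNReal.ofReal_mul (by positivity)]
    · apply ENNReal.ofReal_le_ofReal
      rw [← Finset.mul_sum, mul_left_comm, pow_succ, mul_assoc, h.norm]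
      exact mul_le_mul_of_nonneg_left (avg_bound n hn d hd0) hC0
    · intro p hp
      have := hA p hp
      positivity

/-- `L²` contraction for the proportionally coupled Gibbs samplers on narrow matrices:
`E[‖X_T - Y_T‖₂²] ≤ (1 - 2/(3n))^T ‖X₀ - Y₀‖₂²`. -/
theorem narrow_matrices_L2_contraction
    (n : ℕ) (hn : 2 ≤ n)
    (x y : Fin n × Fin 2 → ℝ) (hx : x ∈ MSet n) (hy : y ∈ MSet n) (T : ℕ) :
    ∫⁻ ω : Fin T → (Fin n × Fin n) × ℝ,
        ENNReal.ofReal (∑ q : Fin n × Fin 2,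
          ((List.ofFn ω).foldl (stepM n) x q - (List.ofFn ω).foldl (stepM n) y q) ^ 2)
        ∂(Measure.pi fun _ => driveM n) ≤
      ENNReal.ofReal ((1 - 2 / (3 * n)) ^ T * ∑ q : Fin n × Fin 2, (x q - y q) ^ 2) := by
  exact contraction_inv n hn T x y ⟨hx.2.1, hy.2.1, by rw [hx.2.2 0, hy.2.2 0]⟩

end
end

section
/- For any x, y ∈ M_n, let x' and y' be the matrices obtained by applying one step of the Gibbs sampler on M_n to x and to y respectively, using the same uniformly random pair of distinct indices 1 ≤ i < j ≤ n and the same uniform λ ∈ [0,1]. Then E[‖x' − y'‖_2²] ≤ (1 − 2/(3n))·‖x − y‖_2², where the expectation is over the uniform choice of (i, j) and λ, and ‖x − y‖_2² = ∑_{i=1}^n ∑_{j=1}^2 (x[i,j] − y[i,j])². -/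
open MeasureTheory

noncomputable section

lemma nm_sum_lt {n : ℕ} (T : Fin n → Fin n → ℝ) (hT : ∀ i j, T i j = T j i) :
    2 * ∑ p ∈ pairsF n, T p.1 p.2 = ∑ i, ∑ j, T i j - ∑ i, T i i := by
  have h1 : ∑ p ∈ pairsF n, T p.1 p.2 = ∑ i, ∑ j, if i < j then T i j else 0 := by
    rw [pairsF, Finset.sum_filter, Fintype.sum_prod_type]
  have h2 : ∑ p ∈ pairsF n, T p.1 p.2 = ∑ i, ∑ j, if j < i then T i j else 0 := by
    rw [h1, Finset.sum_comm]
    refine Finset.sum_congr rfl fun i _ => Finset.sum_congr rfl fun j _ => ?_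
    rw [hT]
  have h3 : ∑ i, T i i = ∑ i, ∑ j, if i = j then T i j else 0 := by
    simp
  rw [two_mul, h3, eq_sub_iff_add_eq]
  nth_rewrite 1 [h1]
  rw [h2]
  simp only [← Finset.sum_add_distrib]
  refine Finset.sum_congr rfl fun i _ => Finset.sum_congr rfl fun j _ => ?_
  rcases lt_trichotomy i j with h | h | h
  · simp [h, h.not_gt, h.ne]
  · simp [h]
  · simp [h, h.not_gt, h.ne']

lemma nm_lint (C α β B : ℝ) (f : ℝ → ℝ)
    (hf : ∀ l, f l = C + α * (l ^ 2 + (1 - l) ^ 2) + β * (l * (1 - l)))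
    (h0 : ∀ l, 0 ≤ f l) (hB : C + 2 / 3 * α + β / 6 ≤ B) :
    ∫⁻ l in Set.Icc (0:ℝ) 1, ENNReal.ofReal (f l) ≤ ENNReal.ofReal B := by
  have hc : Continuous f := by
    rw [funext hf]; fun_prop
  rw [← ofReal_integral_eq_lintegral_ofReal (hc.integrableOn_Icc) (Filter.Eventually.of_forall h0)]
  apply ENNReal.ofReal_le_ofReal
  rw [integral_Icc_eq_integral_Ioc, ← intervalIntegral.integral_of_le zero_le_one]
  have : f = fun l => (C + α) + (β - 2 * α) * l + (2 * α - β) * l ^ 2 := by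
    funext l; rw [hf]; ring
  rw [this, intervalIntegral.integral_add, intervalIntegral.integral_add,
    intervalIntegral.integral_const_mul, intervalIntegral.integral_const_mul]
  · simp
    norm_num
    linarith
  all_goals exact Continuous.intervalIntegrable (by fun_prop) _ _

/-- The new first-column entry of the first updated row. -/
def nmA (s l : ℝ) : ℝ := if 0 ≤ 2 - s then l * s else 2 * l - (1 - l) * (2 - s)

lemma nm_sum {n : ℕ} (x y : Fin n × Fin 2 → ℝ) (hx : x ∈ MSet n) (hy : y ∈ MSet n)
    (i j : Fin n) (hij : i ≠ j) (l : ℝ) :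
    ∑ q : Fin n × Fin 2, (stepM n x ((i, j), l) q - stepM n y ((i, j), l) q) ^ 2
    = 2 * ∑ k, (x (k, 0) - y (k, 0)) ^ 2
      - 2 * ((x (i, 0) - y (i, 0)) ^ 2 + (x (j, 0) - y (j, 0)) ^ 2)
      + 2 * ((nmA (x (i, 0) + x (j, 0)) l - nmA (y (i, 0) + y (j, 0)) l) ^ 2
        + (nmA (x (i, 0) + x (j, 0)) (1 - l) - nmA (y (i, 0) + y (j, 0)) (1 - l)) ^ 2) := by
  have e : ∀ k, x (k, 1) - y (k, 1) = -(x (k, 0) - y (k, 0)) := fun k => by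
    linarith [hx.2.1 k, hy.2.1 k]
  rw [Fintype.sum_prod_type]
  simp only [Fin.sum_univ_two]
  have key : ∑ k, ((stepM n x ((i, j), l) (k, 0) - stepM n y ((i, j), l) (k, 0)) ^ 2
      + (stepM n x ((i, j), l) (k, 1) - stepM n y ((i, j), l) (k, 1)) ^ 2
      - 2 * (x (k, 0) - y (k, 0)) ^ 2) = _ := Fintype.sum_eq_add i j hij (by
    rintro k ⟨h1, h2⟩
    simp [stepM, h1, h2, e]
    ring)
  rw [Finset.sum_sub_distrib, ← Finset.mul_sum] at key
  rw [sub_eq_iff_eq_add] at key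
  rw [key]
  simp only [stepM, nmA, sub_sub, Prod.mk.injEq, hij, hij.symm]
  simp
  split_ifs <;> ring

lemma nm_pair {n : ℕ} (x y : Fin n × Fin 2 → ℝ) (hx : x ∈ MSet n) (hy : y ∈ MSet n)
    (i j : Fin n) (hij : i ≠ j) :
    ∫⁻ l in Set.Icc (0:ℝ) 1, ENNReal.ofReal
      (∑ q : Fin n × Fin 2, (stepM n x ((i, j), l) q - stepM n y ((i, j), l) q) ^ 2)
    ≤ ENNReal.ofReal (2 * ∑ k, (x (k, 0) - y (k, 0)) ^ 2
      - 2 * ((x (i, 0) - y (i, 0)) ^ 2 + (x (j, 0) - y (j, 0)) ^ 2)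
      + 4 / 3 * ((x (i, 0) - y (i, 0)) + (x (j, 0) - y (j, 0))) ^ 2) := by
  have h0 : ∀ l, 0 ≤ ∑ q : Fin n × Fin 2,
      (stepM n x ((i, j), l) q - stepM n y ((i, j), l) q) ^ 2 :=
    fun l => Finset.sum_nonneg fun _ _ => sq_nonneg _
  have hs := nm_sum x y hx hy i j hij
  generalize hC : 2 * ∑ k, (x (k, 0) - y (k, 0)) ^ 2
      - 2 * ((x (i, 0) - y (i, 0)) ^ 2 + (x (j, 0) - y (j, 0)) ^ 2) = C at *
  have hst : (x (i, 0) - y (i, 0)) + (x (j, 0) - y (j, 0))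
    = (x (i, 0) + x (j, 0)) - (y (i, 0) + y (j, 0)) := by ring
  rw [hst]
  generalize x (i, 0) + x (j, 0) = s at *
  generalize y (i, 0) + y (j, 0) = t at *
  by_cases h1 : 0 ≤ 2 - s <;> by_cases h2 : 0 ≤ 2 - t
  · refine nm_lint C (2 * (s - t) ^ 2) 0 _ _ (fun l => ?_) h0 (by linarith)
    rw [hs]; simp only [nmA, h1, h2, if_true]; ring
  · refine nm_lint C (2 * ((2 - s) ^ 2 + (t - 2) ^ 2)) (8 * ((2 - s) * (t - 2))) _ _
      (fun l => ?_) h0 ?_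
    · rw [hs]; simp only [nmA, h1, h2, if_true, if_false]; ring
    · nlinarith [mul_nonneg h1 (by linarith : 0 ≤ t - 2)]
  · refine nm_lint C (2 * ((2 - s) ^ 2 + (t - 2) ^ 2)) (8 * ((s - 2) * (2 - t))) _ _
      (fun l => ?_) h0 ?_
    · rw [hs]; simp only [nmA, h1, h2, if_true, if_false]; ring
    · nlinarith [mul_nonneg h2 (by linarith : 0 ≤ s - 2)]
  · refine nm_lint C (2 * (s - t) ^ 2) 0 _ _ (fun l => ?_) h0 (by linarith)
    rw [hs]; simp only [nmA, h1, h2, if_false]; ring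

/-- One-step `L²` contraction for the proportional coupling on narrow matrices:
`E[‖x' - y'‖₂²] ≤ (1 - 2/(3n)) ‖x - y‖₂²`. -/
theorem narrow_matrices_one_step_L2_contraction
    (n : ℕ) (hn : 2 ≤ n)
    (x y : Fin n × Fin 2 → ℝ) (hx : x ∈ MSet n) (hy : y ∈ MSet n) :
    ∫⁻ u : (Fin n × Fin n) × ℝ,
        ENNReal.ofReal (∑ q : Fin n × Fin 2, (stepM n x u q - stepM n y u q) ^ 2)
        ∂(driveM n) ≤
      ENNReal.ofReal ((1 - 2 / (3 * n)) * ∑ q : Fin n × Fin 2, (x q - y q) ^ 2) := by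
  have hnR : (2:ℝ) ≤ n := by exact_mod_cast hn
  have e : ∀ k, x (k, 1) - y (k, 1) = -(x (k, 0) - y (k, 0)) := fun k => by
    linarith [hx.2.1 k, hy.2.1 k]
  have hS : ∑ q : Fin n × Fin 2, (x q - y q) ^ 2 = 2 * ∑ k, (x (k, 0) - y (k, 0)) ^ 2 := by
    rw [Fintype.sum_prod_type, Finset.mul_sum]
    refine Finset.sum_congr rfl fun k _ => ?_
    rw [Fin.sum_univ_two, e]; ring
  have hD : ∑ k, (x (k, 0) - y (k, 0)) = 0 := by
    rw [Finset.sum_sub_distrib, hx.2.2 0, hy.2.2 0, sub_self]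
  have hpair := nm_pair x y hx hy
  rw [hS, driveM]
  refine (lintegral_prod_le _).trans ?_
  rw [unifOn, lintegral_smul_measure, lintegral_finsetSum_measure]
  simp only [lintegral_dirac]
  set D : Fin n → ℝ := fun k => x (k, 0) - y (k, 0) with hDdef
  set T : Fin n → Fin n → ℝ := fun i j => 2 * ∑ k, D k ^ 2 - 2 * (D i ^ 2 + D j ^ 2)
    + 4 / 3 * (D i + D j) ^ 2 with hT
  have hne : ∀ p ∈ pairsF n, p.1 ≠ p.2 := fun p hp => by
    simp only [pairsF, Finset.mem_filter] at hp
    exact hp.2.ne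
  have hT0 : ∀ p ∈ pairsF n, 0 ≤ T p.1 p.2 := by
    intro p hp
    have h1 : ∑ k ∈ {p.1, p.2}, D k ^ 2 ≤ ∑ k, D k ^ 2 :=
      Finset.sum_le_sum_of_subset_of_nonneg (Finset.subset_univ _) fun _ _ _ => sq_nonneg _
    rw [Finset.sum_pair (hne p hp)] at h1
    have := sq_nonneg (D p.1 + D p.2)
    simp only [hT]; linarith
  have hle : ∑ p ∈ pairsF n, ∫⁻ l in Set.Icc (0:ℝ) 1, ENNReal.ofReal
      (∑ q : Fin n × Fin 2, (stepM n x (p, l) q - stepM n y (p, l) q) ^ 2)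
      ≤ ENNReal.ofReal (∑ p ∈ pairsF n, T p.1 p.2) := by
    rw [ENNReal.ofReal_sum_of_nonneg hT0]
    exact Finset.sum_le_sum fun p hp => hpair p.1 p.2 (hne p hp)
  have hcard : 2 * ((pairsF n).card : ℝ) = n * (n - 1) := by
    have := nm_sum_lt (n := n) (fun _ _ => 1) (fun _ _ => rfl)
    simp at this
    linarith
  have hsum : 2 * ∑ p ∈ pairsF n, T p.1 p.2 =
      (2 * n * (n - 1) - 4 * (n - 1) + 8 / 3 * (n - 2)) * ∑ k, D k ^ 2 := by
    rw [nm_sum_lt T (fun i j => by simp only [hT]; ring)]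
    have r : ∀ i j, T i j = 2 * ∑ k, D k ^ 2 - 2 / 3 * D i ^ 2 - 2 / 3 * D j ^ 2
        + 8 / 3 * (D i * D j) := fun i j => by simp only [hT]; ring
    simp only [r, Finset.sum_add_distrib, Finset.sum_sub_distrib, ← Finset.mul_sum, hD]
    simp only [← pow_two, Finset.sum_const, Finset.card_univ, Fintype.card_fin, nsmul_eq_mul,
      ← Finset.mul_sum, mul_zero]
    ring
  have hcpos : (0:ℝ) < (pairsF n).card := by nlinarith
  have hQ : 0 ≤ ∑ k, D k ^ 2 := Finset.sum_nonneg fun _ _ => sq_nonneg _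
  have hci : ((pairsF n).card : ENNReal)⁻¹ = ENNReal.ofReal (((pairsF n).card : ℝ)⁻¹) := by
    rw [ENNReal.ofReal_inv_of_pos hcpos, ENNReal.ofReal_natCast]
  rw [smul_eq_mul, hci]
  refine (mul_le_mul_right hle _).trans ?_
  rw [← ENNReal.ofReal_mul (by positivity)]
  apply ENNReal.ofReal_le_ofReal
  rw [inv_mul_le_iff₀ hcpos]
  have h1 : ((pairsF n).card : ℝ) = n * (n - 1) / 2 := by linarith
  have h2 : n * (n - 1) / 2 * ((1 - 2 / (3 * (n:ℝ))) * (2 * ∑ k, D k ^ 2))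
    = (n * (n - 1) - 2 / 3 * (n - 1)) * ∑ k, D k ^ 2 := by
    field_simp
  rw [h1, h2]
  nlinarith

end
end
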